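/- arXiv:2005.09386 — 6 statements merged into one kernel-verified Lean document; each statement's English description precedes it below -/
import Mathlib

section
/- (Darboux–Weinstein theorem.) Split ℝ^d = ℝ^k_x × ℝ^{d−k}_y and write points as (x,y). Let ω₀ and ω₁ be two smooth maps from a neighborhood of 0 in ℝ^d into the alternating bilinear forms on ℝ^d, both closed (the cyclic sum of the Fréchet derivative vanishes: Dω_i(z)[u](v,w) + Dω_i(z)[v](w,u) + Dω_i(z)[w](u,v) = 0 for all u,v,w) and both non-degenerate at every point of that neighborhood. Let α ≥ 1 and assume there is C > 0 with ‖ω₁(x,y) − ω₀(x,y)‖ ≤ C|x|^α for all (x,y) in that neighborhood. Then there exist an open neighborhood V of 0 in ℝ^d, a smooth map ψ : V → ℝ^d which is a diffeomorphism onto its image, and C' > 0 such that: (i) ω₁(ψ(z))(Dψ(z)u, Dψ(z)v) = ω₀(z)(u,v) for all z ∈ V and u,v ∈ ℝ^d (i.e. ψ*ω₁ = ω₀); and (ii) ‖ψ(x,y) − (x,y)‖ ≤ C'|x|^{α+1} for all (x,y) ∈ V. -/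
noncomputable section

/-- `f` is a smooth diffeomorphism from `U` onto `V`. -/
def IsDiffeoOn {E F : Type*} [NormedAddCommGroup E] [NormedSpace ℝ E]
    [NormedAddCommGroup F] [NormedSpace ℝ F] (f : E → F) (U : Set E) (V : Set F) : Prop :=
  ContDiffOn ℝ (⊤ : ℕ∞) f U ∧ Set.BijOn f U V ∧
    ∃ finv : F → E, ContDiffOn ℝ (⊤ : ℕ∞) finv V ∧ Set.InvOn finv f U V

/-- A 2-form is closed on `W` when the cyclic sum of its Fréchet derivative
vanishes there. -/
def Closed2FormOn {X : Type*} [NormedAddCommGroup X] [NormedSpace ℝ X]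
    (ω : X → (X →L[ℝ] X →L[ℝ] ℝ)) (W : Set X) : Prop :=
  ∀ z ∈ W, ∀ u v w : X,
    fderiv ℝ ω z u v w + fderiv ℝ ω z v w u + fderiv ℝ ω z w u v = 0

namespace DW
open Set Filter Topology
set_option linter.unusedSectionVars false

variable {K : Type} [TopologicalSpace K] [CompactSpace K]
variable {E : Type} [NormedAddCommGroup E] [NormedSpace ℝ E]

/-- pointwise evaluation. -/
def evB (K E F : Type) [TopologicalSpace K] [CompactSpace K]
    [NormedAddCommGroup E] [NormedSpace ℝ E] [NormedAddCommGroup F] [NormedSpace ℝ F] :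
    C(K, E →L[ℝ] F) →L[ℝ] C(K, E) →L[ℝ] C(K, F) :=
  LinearMap.mkContinuous₂
    (LinearMap.mk₂ ℝ (fun (A : C(K, E →L[ℝ] F)) (h : C(K, E)) =>
        (⟨fun s => A s (h s), A.continuous.clm_apply h.continuous⟩ : C(K, F)))
      (by intros; ext; simp) (by intros; ext; simp) (by intros; ext; simp) (by intros; ext; simp))
    1 (by
      intro A h
      rw [ContinuousMap.norm_le _ (by positivity)]
      intro s
      rw [one_mul]
      exact (ContinuousLinearMap.le_opNorm _ _).trans
        (mul_le_mul (A.norm_coe_le_norm s) (h.norm_coe_le_norm s) (norm_nonneg _) (by positivity)))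

theorem evB_apply {F : Type} [NormedAddCommGroup F] [NormedSpace ℝ F]
    (A : C(K, E →L[ℝ] F)) (h : C(K, E)) (s : K) : evB K E F A h s = A s (h s) := rfl

/-- Nemytskii operator -/
def nem {F : Type} [TopologicalSpace F] (f : E → F) (hf : Continuous f) (γ : C(K, E)) : C(K, F) :=
  (⟨f, hf⟩ : C(E, F)).comp γ

theorem nem_continuous {F : Type} [TopologicalSpace F] (f : E → F) (hf : Continuous f) :
    Continuous (nem (K := K) f hf) := ContinuousMap.continuous_postcomp _

theorem nem_hasFDerivAt {F : Type} [NormedAddCommGroup F] [NormedSpace ℝ F] (f : E → F)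
    (hf : ContDiff ℝ 1 f) (γ : C(K, E)) :
    HasFDerivAt (nem (K := K) f hf.continuous)
      (evB K E F (nem (fderiv ℝ f) (hf.continuous_fderiv one_ne_zero) γ)) γ := by
  have hc := (nem_continuous (K := K) (fderiv ℝ f) (hf.continuous_fderiv one_ne_zero)).continuousAt
    (x := γ)
  rw [hasFDerivAt_iff_isLittleO_nhds_zero, Asymptotics.isLittleO_iff]
  intro ε hε
  obtain ⟨δ, hδ, hc⟩ := (Metric.continuousAt_iff (α := C(K, E)) (β := C(K, E →L[ℝ] F))).1 hc ε hε
  filter_upwards [Metric.ball_mem_nhds (0 : C(K, E)) hδ] with h hh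
  rw [ContinuousMap.norm_le _ (by positivity)]
  intro s
  have hdiff : ∀ x, DifferentiableAt ℝ f x := fun x => (hf.differentiable one_ne_zero) x
  have key := Convex.norm_image_sub_le_of_norm_hasFDerivWithin_le' (𝕜 := ℝ) (f := f)
    (f' := fderiv ℝ f) (φ := fderiv ℝ f (γ s)) (C := ε) (s := segment ℝ (γ s) (γ s + h s))
    (x := γ s) (y := γ s + h s)
    (fun x _ => (hdiff x).hasFDerivAt.hasFDerivWithinAt) ?_ (convex_segment _ _)
    (left_mem_segment _ _ _) (right_mem_segment _ _ _)
  · rw [add_sub_cancel_left] at key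
    refine le_trans ?_ (key.trans (mul_le_mul_of_nonneg_left (h.norm_coe_le_norm s) hε.le))
    rfl
  · intro x hx
    rw [segment_eq_image'] at hx
    obtain ⟨θ, hθ, rfl⟩ := hx
    have h2 : dist (γ + θ • h) γ < δ := by
      rw [dist_eq_norm, add_sub_cancel_left, norm_smul, Real.norm_of_nonneg hθ.1]
      rw [mem_ball_zero_iff] at hh
      nlinarith [norm_nonneg h, hθ.2]
    have h3 := (hc h2).le
    have h4 := (ContinuousMap.dist_apply_le_dist s).trans h3
    rw [dist_eq_norm] at h4
    simpa [nem] using h4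

theorem nem_contDiff_nat (n : ℕ) : ∀ {F : Type} [NormedAddCommGroup F] [NormedSpace ℝ F] (f : E → F)
    (hf : ContDiff ℝ n f), ContDiff ℝ n (nem (K := K) f hf.continuous) := by
  induction n with
  | zero =>
    intro F _ _ f hf
    exact contDiff_zero.2 (nem_continuous _ _)
  | succ n ih =>
    intro F _ _ f hf
    have h1 : ContDiff ℝ 1 f := hf.of_le (by exact_mod_cast Nat.le_add_left 1 n)
    push_cast
    rw [contDiff_succ_iff_fderiv]
    refine ⟨fun γ => (nem_hasFDerivAt f h1 γ).differentiableAt, by simp, ?_⟩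
    have : fderiv ℝ (nem (K := K) f hf.continuous) = fun γ => evB K E F (nem (fderiv ℝ f) (h1.continuous_fderiv one_ne_zero) γ) :=
      funext fun γ => (nem_hasFDerivAt f h1 γ).fderiv
    rw [this]
    push_cast at hf
    rw [contDiff_succ_iff_fderiv] at hf
    exact (evB K E F).contDiff.comp (ih _ hf.2.2)

theorem nem_contDiff {F : Type} [NormedAddCommGroup F] [NormedSpace ℝ F] (f : E → F)
    (hf : ContDiff ℝ (⊤ : ℕ∞) f) : ContDiff ℝ (⊤ : ℕ∞) (nem (K := K) f hf.continuous) := by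
  rw [contDiff_infty]
  exact fun n => nem_contDiff_nat n f (contDiff_infty.1 hf n)

abbrev I := Icc (0 : ℝ) 1
/-- extension to the line -/
def ext {E : Type} [TopologicalSpace E] (g : C(I, E)) (s : ℝ) : E := g (projIcc 0 1 zero_le_one s)

theorem ext_continuous {E : Type} [TopologicalSpace E] (g : C(I, E)) : Continuous (ext g) :=
  g.continuous.comp continuous_projIcc

theorem ext_of_mem {E : Type} [TopologicalSpace E] (g : C(I, E)) {s : ℝ} (hs : s ∈ I) :
  ext g s = g ⟨s, hs⟩ := by simp [ext, projIcc_of_mem zero_le_one hs]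

/-- Integration from 0. -/
def J (E : Type) [NormedAddCommGroup E] [NormedSpace ℝ E] : C(I, E) →L[ℝ] C(I, E) :=
  LinearMap.mkContinuous
    { toFun := fun g => ⟨fun t => ∫ s in (0:ℝ)..t, ext g s,
        (intervalIntegral.continuous_primitive
          (fun a b => (ext_continuous g).intervalIntegrable a b) 0).comp continuous_subtype_val⟩
      map_add' := by
        intro g h; ext t
        exact intervalIntegral.integral_add ((ext_continuous g).intervalIntegrable _ _)
          ((ext_continuous h).intervalIntegrable _ _)
      map_smul' := by
        intro c g; ext t
        exact intervalIntegral.integral_smul c _ }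
    1 (by
      intro g
      rw [ContinuousMap.norm_le _ (by positivity)]
      intro t
      have := intervalIntegral.norm_integral_le_of_norm_le_const (a := 0) (b := (t : ℝ)) (f := ext g)
        (C := ‖g‖) (fun x _ => g.norm_coe_le_norm _)
      refine this.trans ?_
      rw [sub_zero, abs_of_nonneg t.2.1, mul_comm]
      exact mul_le_mul_of_nonneg_right t.2.2 (norm_nonneg _))

theorem J_apply (g : C(I, E)) (t : I) : J E g t = ∫ s in (0:ℝ)..t, ext g s := rfl

/-- graph map -/
def gr (E : Type) [NormedAddCommGroup E] [NormedSpace ℝ E] (γ : C(I, E)) : C(I, ℝ × E) :=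
  (ContinuousLinearMap.inr ℝ ℝ E).compLeftContinuous ℝ I γ +
    ⟨fun s => ((s : ℝ), (0 : E)), by fun_prop⟩

theorem gr_apply (γ : C(I, E)) (s : I) : gr E γ s = ((s : ℝ), γ s) := by
  simp [gr]

theorem nem_gr_apply {F : Type} [TopologicalSpace F] (f : ℝ × E → F) (hf : Continuous f)
    (γ : C(I, E)) (s : I) : nem f hf (gr E γ) s = f ((s : ℝ), γ s) := by
  rw [← gr_apply]
  rfl

theorem gr_hasFDerivAt (γ : C(I, E)) :
    HasFDerivAt (gr E) ((ContinuousLinearMap.inr ℝ ℝ E).compLeftContinuous ℝ I) γ :=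
  (ContinuousLinearMap.hasFDerivAt _).add_const _

theorem gr_contDiff : ContDiff ℝ (⊤ : ℕ∞) (gr E) :=
  (ContinuousLinearMap.contDiff _).add contDiff_const


theorem local_inv {X Y : Type} [NormedAddCommGroup X] [NormedSpace ℝ X] [CompleteSpace X]
    [NormedAddCommGroup Y] [NormedSpace ℝ Y] (Φ : X → Y) (U : Set X) (hU : IsOpen U)
    (hΦ : ContDiffOn ℝ (⊤ : ℕ∞) Φ U) (a : X) (ha : a ∈ U) (e : X ≃L[ℝ] Y)
    (he : HasFDerivAt Φ (e : X →L[ℝ] Y) a) :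
    ∃ g : OpenPartialHomeomorph X Y, a ∈ g.source ∧ g.source ⊆ U ∧ (∀ x, g x = Φ x) ∧
      ContDiffOn ℝ (⊤ : ℕ∞) g.symm g.target ∧
      ∀ x ∈ g.source, ∃ e' : X ≃L[ℝ] Y, HasFDerivAt Φ (e' : X →L[ℝ] Y) x := by
  have hat : ∀ x ∈ U, ContDiffAt ℝ (⊤ : ℕ∞) Φ x := fun x hx => hΦ.contDiffAt (hU.mem_nhds hx)
  have htop : ((⊤ : ℕ∞) : WithTop ℕ∞) ≠ 0 := by simp
  let g0 := (hat a ha).toOpenPartialHomeomorph Φ he htop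
  have hcont : ContinuousOn (fderiv ℝ Φ) U := hΦ.continuousOn_fderiv_of_isOpen hU (by simp)
  have hU' := hcont.isOpen_inter_preimage hU (ContinuousLinearEquiv.isOpen (𝕜 := ℝ) (E := X) (F := Y))
  have haU' : a ∈ U ∩ fderiv ℝ Φ ⁻¹' range ((↑) : (X ≃L[ℝ] Y) → X →L[ℝ] Y) :=
    ⟨ha, e, he.fderiv.symm⟩
  have hinv : ∀ x ∈ U ∩ fderiv ℝ Φ ⁻¹' range ((↑) : (X ≃L[ℝ] Y) → X →L[ℝ] Y),
      ∃ e' : X ≃L[ℝ] Y, HasFDerivAt Φ (e' : X →L[ℝ] Y) x := by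
    rintro x ⟨hxU, e', he'⟩
    refine ⟨e', ?_⟩
    rw [he']
    exact ((hat x hxU).differentiableAt htop).hasFDerivAt
  refine ⟨g0.restrOpen _ hU', ?_, ?_, ?_, ?_, ?_⟩
  · exact ⟨(hat a ha).mem_toOpenPartialHomeomorph_source he htop, haU'⟩
  · intro x hx
    exact hx.2.1
  · intro x; rfl
  · intro y hy
    have hs := (g0.restrOpen _ hU').map_target hy
    obtain ⟨e', he'⟩ := hinv _ hs.2
    exact ((g0.restrOpen _ hU').contDiffAt_symm hy (f₀' := e') he' (hat _ hs.2.1)).contDiffWithinAt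
  · intro x hx
    exact hinv x hx.2

/-- constants -/
def cst (E : Type) [NormedAddCommGroup E] [NormedSpace ℝ E] : E →L[ℝ] C(I, E) :=
  LinearMap.mkContinuous
    { toFun := fun z => ContinuousMap.const I z
      map_add' := by intros; rfl
      map_smul' := by intros; rfl } 1 (by
      intro z
      rw [ContinuousMap.norm_le _ (by positivity)]
      intro t
      rw [one_mul]
      exact le_refl _)

theorem cst_apply (z : E) (t : I) : cst E z t = z := rfl

theorem J_contDiff (f : ℝ × E → E) (hf : ContDiff ℝ (⊤ : ℕ∞) f) :
    ContDiff ℝ (⊤ : ℕ∞) (fun γ : C(I, E) => J E (nem f hf.continuous (gr E γ))) :=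
  (J E).contDiff.comp ((nem_contDiff f hf).comp gr_contDiff)

theorem nemgr_hasFDerivAt {F : Type} [NormedAddCommGroup F] [NormedSpace ℝ F]
    (f : ℝ × E → F) (hf : ContDiff ℝ (⊤ : ℕ∞) f) (γ : C(I, E)) :
    HasFDerivAt (fun γ : C(I, E) => nem f hf.continuous (gr E γ))
      ((evB I (ℝ × E) F (nem (fderiv ℝ f) (hf.continuous_fderiv (by simp)) (gr E γ))).comp
        ((ContinuousLinearMap.inr ℝ ℝ E).compLeftContinuous ℝ I)) γ :=
  (nem_hasFDerivAt f (hf.of_le (by exact_mod_cast le_top)) (gr E γ)).comp γ (gr_hasFDerivAt γ)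

theorem flow [CompleteSpace E] (f : ℝ × E → E) (hf : ContDiff ℝ (⊤ : ℕ∞) f) (K : ℝ)
    (hK : ∀ t ∈ I, ∀ z, ‖z‖ ≤ 1 → ‖f (t, z)‖ ≤ K * ‖z‖ ^ 2) (ρ : ℝ) (hρ : 0 < ρ) :
    ∃ (V : Set E) (Γ : E → C(I, E)), IsOpen V ∧ 0 ∈ V ∧ ContDiffOn ℝ (⊤ : ℕ∞) Γ V ∧
      (∀ z ∈ V, ‖Γ z‖ < ρ) ∧
      (∀ z ∈ V, Γ z = cst E z + J E (nem f hf.continuous (gr E (Γ z)))) ∧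
      HasFDerivAt Γ (cst E) 0 := by
  let Φ : C(I, E) → C(I, E) := fun γ => γ - J E (nem f hf.continuous (gr E γ))
  have hK0 : 0 ≤ |K| := abs_nonneg K
  have hΦ : ContDiff ℝ (⊤ : ℕ∞) Φ := contDiff_id.sub (J_contDiff f hf)
  have hbd : ∀ γ : C(I, E), ‖γ‖ ≤ 1 → ‖J E (nem f hf.continuous (gr E γ))‖ ≤ |K| * ‖γ‖ ^ 2 := by
    intro γ hγ
    rw [ContinuousMap.norm_le _ (by positivity)]
    intro t
    rw [J_apply]
    have := intervalIntegral.norm_integral_le_of_norm_le_const (a := 0) (b := (t : ℝ))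
      (f := ext (nem f hf.continuous (gr E γ))) (C := |K| * ‖γ‖ ^ 2) (by
        intro x _
        simp only [ext, nem, ContinuousMap.comp_apply, ContinuousMap.coe_mk, gr_apply]
        have h1 := γ.norm_coe_le_norm (projIcc 0 1 zero_le_one x)
        refine (hK _ (projIcc 0 1 zero_le_one x).2 _ (h1.trans hγ)).trans ?_
        exact mul_le_mul (le_abs_self K) (pow_le_pow_left₀ (norm_nonneg _) h1 2) (by positivity) hK0)
    refine this.trans ?_
    rw [sub_zero, abs_of_nonneg t.2.1]
    exact mul_le_of_le_one_right (by positivity) t.2.2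
  have hz : J E (nem f hf.continuous (gr E 0)) = 0 := by
    have := hbd 0 (by simp)
    simpa using this
  have hΦ0 : Φ 0 = 0 := by simp [Φ, hz]
  have hder : HasFDerivAt Φ ((ContinuousLinearEquiv.refl ℝ C(I, E)) : C(I, E) →L[ℝ] C(I, E)) 0 := by
    rw [hasFDerivAt_iff_isLittleO_nhds_zero, Asymptotics.isLittleO_iff]
    intro c hc
    have hpos : 0 < min 1 (c / (|K| + 1)) := by positivity
    filter_upwards [Metric.ball_mem_nhds (0 : C(I, E)) hpos] with h hh
    rw [mem_ball_zero_iff, lt_min_iff, lt_div_iff₀ (by positivity)] at hh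
    have : Φ (0 + h) - Φ 0 - (ContinuousLinearEquiv.refl ℝ C(I, E) : C(I, E) →L[ℝ] C(I, E)) h
        = - J E (nem f hf.continuous (gr E h)) := by
      rw [hΦ0, zero_add]
      simp [Φ]
    rw [this, norm_neg]
    refine (hbd h hh.1.le).trans ?_
    have h0 : 0 ≤ ‖h‖ := by positivity
    nlinarith
  obtain ⟨g, hg0, -, hgΦ, hgs, -⟩ := local_inv Φ univ isOpen_univ hΦ.contDiffOn 0 (mem_univ _)
    (ContinuousLinearEquiv.refl ℝ C(I, E)) hder
  have hgt0 : (0 : C(I, E)) ∈ g.target := by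
    have := g.map_source hg0
    rwa [hgΦ, hΦ0] at this
  have hgs0 : g.symm 0 = 0 := by
    have := g.left_inv hg0
    rwa [hgΦ, hΦ0] at this
  have hVo : IsOpen (cst E ⁻¹' (g.target ∩ g.symm ⁻¹' Metric.ball 0 ρ)) :=
    (g.symm.isOpen_inter_preimage Metric.isOpen_ball).preimage (cst E).continuous
  refine ⟨_, fun z => g.symm (cst E z), hVo, ?_, ?_, ?_, ?_, ?_⟩
  · simp [hgt0, hgs0, hρ]
  · exact hgs.comp (cst E).contDiff.contDiffOn (fun z hz => hz.1)
  · intro z hz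
    simpa using hz.2
  · intro z hz
    have := g.right_inv hz.1
    rw [hgΦ] at this
    exact sub_eq_iff_eq_add.1 this
  · have h1 : HasFDerivAt g.symm ((ContinuousLinearEquiv.refl ℝ C(I, E)).symm : C(I, E) →L[ℝ] C(I, E)) 0 := by
      apply g.hasFDerivAt_symm hgt0
      rw [hgs0]
      exact hder.congr_of_eventuallyEq (Eventually.of_forall hgΦ)
    have h2 := HasFDerivAt.comp (0 : E) (f := cst E) (g := g.symm) (by simpa using h1) (cst E).hasFDerivAt
    exact h2

theorem deriv_eq [CompleteSpace E] (f : ℝ × E → E) (hf : ContDiff ℝ (⊤ : ℕ∞) f)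
    (V : Set E) (hV : IsOpen V) (Γ : E → C(I, E)) (hΓ : ContDiffOn ℝ (⊤ : ℕ∞) Γ V)
    (heq : ∀ z ∈ V, Γ z = cst E z + J E (nem f hf.continuous (gr E (Γ z)))) (z : E) (hz : z ∈ V)
    (u : E) : fderiv ℝ Γ z u = cst E u +
      J E (evB I (ℝ × E) E (nem (fderiv ℝ f) (hf.continuous_fderiv (by simp)) (gr E (Γ z)))
        ((ContinuousLinearMap.inr ℝ ℝ E).compLeftContinuous ℝ I (fderiv ℝ Γ z u))) := by
  have h1 : HasFDerivAt Γ (fderiv ℝ Γ z) z :=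
    ((hΓ.contDiffAt (hV.mem_nhds hz)).differentiableAt (by simp)).hasFDerivAt
  have h2 := (cst E).hasFDerivAt (x := z) |>.add
    ((J E).hasFDerivAt.comp z ((nemgr_hasFDerivAt f hf (Γ z)).comp z h1))
  have h3 := h2.congr_of_eventuallyEq (f₁ := Γ) (by
    filter_upwards [hV.mem_nhds hz] with w hw
    exact heq w hw)
  have h4 := h1.unique h3
  conv_lhs => rw [h4]
  rfl

theorem hasDeriv_of_eq [CompleteSpace E] (g h : C(I, E)) (c : E) (hg : g = cst E c + J E h) (t : I) :
    HasDerivWithinAt (ext g) (h t) I t := by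
  have h1 : HasDerivAt (fun x : ℝ => c + ∫ s in (0:ℝ)..x, ext h s) (ext h t) t :=
    ((ext_continuous h).integral_hasStrictDerivAt 0 t).hasDerivAt.const_add c
  rw [ext_of_mem h t.2] at h1
  refine h1.hasDerivWithinAt.congr_of_mem ?_ t.2
  intro x hx
  rw [ext_of_mem g hx]
  conv_lhs => rw [hg]
  rfl


theorem path_deriv {F : Type} [NormedAddCommGroup F] [NormedSpace ℝ F] {η : E → F} {D : E →L[ℝ] F}
    {p : ℝ → E} {p' : E} {s : ℝ} {S : Set ℝ} (hη : HasFDerivAt η D (p s))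
    (hp : HasDerivWithinAt p p' S s) : HasDerivWithinAt (fun r => η (p r)) (D p') S s := by
  have := hη.comp_hasDerivWithinAt s hp
  exact this

theorem tri_deriv {η : E → E →L[ℝ] E →L[ℝ] ℝ} {D : E →L[ℝ] E →L[ℝ] E →L[ℝ] ℝ} {p a b : ℝ → E}
    {p' a' b' : E} {s : ℝ} {S : Set ℝ} (hη : HasFDerivAt η D (p s)) (hp : HasDerivWithinAt p p' S s)
    (ha : HasDerivWithinAt a a' S s) (hb : HasDerivWithinAt b b' S s) :
    HasDerivWithinAt (fun r => η (p r) (a r) (b r))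
      (D p' (a s) (b s) + η (p s) a' (b s) + η (p s) (a s) b') S s := by
  have h1 : HasDerivWithinAt (fun r => η (p r)) (D p') S s :=
    path_deriv (F := E →L[ℝ] E →L[ℝ] ℝ) (η := η) (D := D) hη hp
  have h2 : HasDerivWithinAt (fun r => η (p r) (a r)) (D p' (a s) + η (p s) a') S s := h1.clm_apply ha
  have h3 : HasDerivWithinAt (fun r => η (p r) (a r) (b r))
    ((D p' (a s) + η (p s) a') (b s) + η (p s) (a s) b') S s := h2.clm_apply hb
  exact h3

theorem line_deriv (z u : E) : HasDerivAt (fun r : ℝ => z + r • u) u 0 := by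
  simpa using ((hasDerivAt_id (0:ℝ)).smul_const u).const_add z

theorem fderiv_swap {η : E → E →L[ℝ] E →L[ℝ] ℝ} {D : E →L[ℝ] E →L[ℝ] E →L[ℝ] ℝ} {w : E}
    (halt : ∀ z u v, η z u v = - η z v u) (hη : HasFDerivAt η D w) (a b c : E) :
    D a b c = - D a c b := by
  have hd2 : HasFDerivAt η D (w + (0:ℝ) • a) := by rwa [zero_smul, add_zero]
  have hc : ∀ x : E, HasDerivWithinAt (fun _ : ℝ => x) 0 univ 0 :=
    fun x => (hasDerivAt_const (0:ℝ) x).hasDerivWithinAt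
  have hl := (line_deriv w a).hasDerivWithinAt (s := univ)
  have e1 := tri_deriv hd2 hl (hc b) (hc c)
  have e2 : HasDerivWithinAt (fun r : ℝ => - η (w + r • a) c b) _ univ 0 := (tri_deriv hd2 hl (hc c) (hc b)).neg
  have e4 : (fun r : ℝ => η (w + r • a) b c) = (fun r : ℝ => - η (w + r • a) c b) :=
    funext fun r => halt _ _ _
  rw [e4, hasDerivWithinAt_univ] at e1
  have e3 := e1.unique (hasDerivWithinAt_univ.1 e2)
  simpa using e3

theorem poincare (P Q : E →L[ℝ] E) (hPQ : ∀ z, P z + Q z = z)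
    (η : E → E →L[ℝ] E →L[ℝ] ℝ) (hη : ContDiff ℝ (⊤ : ℕ∞) η)
    (halt : ∀ z u v, η z u v = - η z v u) (B : Set E) 
    (hcl : ∀ z ∈ B, ∀ u v w, fderiv ℝ η z u v w + fderiv ℝ η z v w u + fderiv ℝ η z w u v = 0)
    (hst : ∀ z ∈ B, ∀ t ∈ I, t • P z + Q z ∈ B) (h0 : ∀ z, η (Q z) = 0) :
    ∃ l : E → E →L[ℝ] ℝ, ContDiff ℝ (⊤ : ℕ∞) l ∧
      (∀ z ∈ B, ∀ u v, fderiv ℝ l z u v - fderiv ℝ l z v u = η z u v) ∧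
      ∀ z M, (∀ t ∈ I, ‖η (t • P z + Q z)‖ * ‖P z‖ * ‖t • P + Q‖ ≤ M) → ‖l z‖ ≤ M := by
  have hdη : ∀ z, HasFDerivAt η (fderiv ℝ η z) z := fun z =>
    (hη.differentiable (by simp) z).hasFDerivAt
  let G : ℝ × E → E →L[ℝ] ℝ := fun p => (η (p.1 • P p.2 + Q p.2) (P p.2)).comp (p.1 • P + Q)
  have hG : ContDiff ℝ (⊤ : ℕ∞) G := by
    have h1 : ContDiff ℝ (⊤ : ℕ∞) (fun p : ℝ × E => p.1 • P p.2 + Q p.2) := by fun_prop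
    have h2 : ContDiff ℝ (⊤ : ℕ∞) (fun p : ℝ × E => p.1 • P + Q) := by fun_prop
    have h3 : ContDiff ℝ (⊤ : ℕ∞) (fun p : ℝ × E => P p.2) := by fun_prop
    exact ((hη.comp h1).clm_apply h3).clm_comp h2
  let ev : C(I, E →L[ℝ] ℝ) →L[ℝ] (E →L[ℝ] ℝ) := ContinuousMap.evalCLM ℝ (1 : I)
  let l : E → E →L[ℝ] ℝ := fun z => (ev.comp (J (E →L[ℝ] ℝ))) (nem G hG.continuous (gr E (cst E z)))
  have hG' : ∀ s z u v, fderiv ℝ G (s, z) (0, u) v =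
      fderiv ℝ η (s • P z + Q z) (s • P u + Q u) (P z) (s • P v + Q v) +
        η (s • P z + Q z) (P u) (s • P v + Q v) := by
    intro s z u v
    have hpath : HasDerivAt (fun r : ℝ => (s, z + r • u)) ((0 : ℝ), u) 0 :=
      (hasDerivAt_const (0:ℝ) s).prodMk (line_deriv z u)
    have hd : HasFDerivAt G (fderiv ℝ G (s, z)) ((s, z + (0:ℝ) • u)) := by
      rw [zero_smul, add_zero]
      exact (hG.differentiable (by simp) _).hasFDerivAt
    have h0 : HasDerivAt (fun r : ℝ => G (s, z + r • u)) (fderiv ℝ G (s, z) (0, u)) 0 := by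
      have := hd.comp_hasDerivAt (0:ℝ) hpath
      exact this
    have h1 : HasDerivAt (fun r : ℝ => G (s, z + r • u) v) (fderiv ℝ G (s, z) (0, u) v) 0 := by
      simpa using h0.clm_apply (hasDerivAt_const (0:ℝ) v)
    have hPd : HasDerivAt (fun r : ℝ => P (z + r • u)) (P u) 0 :=
      P.hasFDerivAt.comp_hasDerivAt (0:ℝ) (line_deriv z u)
    have hQd : HasDerivAt (fun r : ℝ => Q (z + r • u)) (Q u) 0 :=
      Q.hasFDerivAt.comp_hasDerivAt (0:ℝ) (line_deriv z u)
    have hL : HasDerivAt (fun r : ℝ => s • P (z + r • u) + Q (z + r • u)) (s • P u + Q u) 0 := 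
      (hPd.const_smul s).add hQd
    have hd2 : HasFDerivAt η (fderiv ℝ η (s • P z + Q z)) (s • P (z + (0:ℝ) • u) + Q (z + (0:ℝ) • u)) := by
      rw [zero_smul, add_zero]
      exact hdη _
    have h2 := tri_deriv hd2 hL.hasDerivWithinAt hPd.hasDerivWithinAt
      (hasDerivAt_const (0:ℝ) (s • P v + Q v)).hasDerivWithinAt (S := univ)
    have h3 := h1.unique (hasDerivWithinAt_univ.1 h2)
    rw [h3]
    simp
  have hl' : ∀ z, HasFDerivAt l ((ev.comp (J (E →L[ℝ] ℝ))).comp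
      (((evB I (ℝ × E) (E →L[ℝ] ℝ) (nem (fderiv ℝ G) (hG.continuous_fderiv (by simp)) (gr E (cst E z)))).comp
        ((ContinuousLinearMap.inr ℝ ℝ E).compLeftContinuous ℝ I)).comp (cst E))) z := by
    intro z
    exact (ContinuousLinearMap.hasFDerivAt _).comp z
      ((nemgr_hasFDerivAt G hG (cst E z)).comp z (cst E).hasFDerivAt)
  have hl'' : ∀ z u v, fderiv ℝ l z u v = ∫ s in (0:ℝ)..1, fderiv ℝ G (s, z) (0, u) v := by
    intro z u v
    rw [(hl' z).fderiv]
    set H := evB I (ℝ × E) (E →L[ℝ] ℝ) (nem (fderiv ℝ G) (hG.continuous_fderiv (by simp)) (gr E (cst E z)))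
      ((ContinuousLinearMap.inr ℝ ℝ E).compLeftContinuous ℝ I (cst E u)) with hH
    have h1 : (∫ s in (0:ℝ)..1, ext H s) v = ∫ s in (0:ℝ)..1, ext H s v :=
      ContinuousLinearMap.intervalIntegral_apply ((ext_continuous H).intervalIntegrable _ _) v
    refine Eq.trans h1 ?_
    refine intervalIntegral.integral_congr ?_
    intro s hs
    rw [uIcc_of_le zero_le_one] at hs
    have hHs : H ⟨s, hs⟩ = fderiv ℝ G (s, z) (0, u) := by
      rw [hH, evB_apply, nem_gr_apply]
      rfl
    simp only [ext_of_mem H hs, hHs]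
  have hcG : ∀ z u v, Continuous (fun s : ℝ => fderiv ℝ G (s, z) (0, u) v) := by
    intro z u v
    have := hG.continuous_fderiv (by simp)
    fun_prop
  refine ⟨l, ?_, ?_, ?_⟩
  · exact (ContinuousLinearMap.contDiff _).comp ((nem_contDiff G hG).comp (gr_contDiff.comp (cst E).contDiff))
  · intro z hz u v
    rw [hl'', hl'', ← intervalIntegral.integral_sub ((hcG z u v).intervalIntegrable _ _)
      ((hcG z v u).intervalIntegrable _ _)]
    have hL : ∀ (w : E) (s : ℝ), HasDerivAt (fun r : ℝ => r • P w + Q w) (P w) s := by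
      intro w s
      simpa using ((hasDerivAt_id s).smul_const (P w)).add_const (Q w)
    have hFTC := intervalIntegral.integral_eq_sub_of_hasDerivAt (a := (0:ℝ)) (b := 1)
      (f := fun s : ℝ => η (s • P z + Q z) (s • P u + Q u) (s • P v + Q v))
      (f' := fun s : ℝ => fderiv ℝ G (s, z) (0, u) v - fderiv ℝ G (s, z) (0, v) u) ?_
      (((hcG z u v).sub (hcG z v u)).intervalIntegrable _ _)
    · rw [hFTC]
      simp [hPQ, h0]
    · intro s hs
      rw [uIcc_of_le zero_le_one] at hs
      have h2 := tri_deriv (hdη (s • P z + Q z)) (hL z s).hasDerivWithinAt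
        (hL u s).hasDerivWithinAt (hL v s).hasDerivWithinAt (S := univ)
      rw [hasDerivWithinAt_univ] at h2
      convert h2 using 1
      rw [hG', hG']
      have c1 := hcl _ (hst z hz s hs) (P z) (s • P u + Q u) (s • P v + Q v)
      have c2 := fderiv_swap halt (hdη (s • P z + Q z)) (s • P u + Q u) (P z) (s • P v + Q v)
      have c3 := halt (s • P z + Q z) (P v) (s • P u + Q u)
      linarith
  · intro z M hM
    have h1 : l z = ∫ s in (0:ℝ)..1, ext (nem G hG.continuous (gr E (cst E z))) s := rfl
    rw [h1]
    have := intervalIntegral.norm_integral_le_of_norm_le_const (a := 0) (b := (1 : ℝ))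
      (f := ext (nem G hG.continuous (gr E (cst E z)))) (C := M) ?_
    · simpa using this
    · intro x hx
      simp only [ext, nem, ContinuousMap.comp_apply, ContinuousMap.coe_mk, gr_apply, cst_apply]
      refine le_trans ?_ (hM _ (projIcc 0 1 zero_le_one x).2)
      refine (ContinuousLinearMap.opNorm_comp_le _ _).trans ?_
      exact mul_le_mul_of_nonneg_right (ContinuousLinearMap.le_opNorm _ _) (norm_nonneg _)

end DW
namespace DW
open Set Filter Topology

section moser
variable {E : Type} [NormedAddCommGroup E] [NormedSpace ℝ E]

theorem sm {X F : Type} [NormedAddCommGroup X] [NormedSpace ℝ X] [NormedAddCommGroup F]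
    [NormedSpace ℝ F] {f : X → ℝ} {g : X → F} (hf : ContDiff ℝ (⊤ : ℕ∞) f)
    (hg : ContDiff ℝ (⊤ : ℕ∞) g) : ContDiff ℝ (⊤ : ℕ∞) (fun x => f x • g x) := hf.smul hg

/-- The Moser vector field. -/
def fld (ω₀ ω₁ : E → E →L[ℝ] E →L[ℝ] ℝ) (l : E → E →L[ℝ] ℝ) (p : ℝ × E) : E :=
  -(deriv Real.smoothTransition p.1 •
    ContinuousLinearMap.inverse (ω₀ p.2 + Real.smoothTransition p.1 • (ω₁ p.2 - ω₀ p.2)) (l p.2))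

theorem fld_contDiff [CompleteSpace E] (ω₀ ω₁ : E → E →L[ℝ] E →L[ℝ] ℝ) (l : E → E →L[ℝ] ℝ)
    (h₀ : ContDiff ℝ (⊤ : ℕ∞) ω₀) (h₁ : ContDiff ℝ (⊤ : ℕ∞) ω₁) (hl : ContDiff ℝ (⊤ : ℕ∞) l)
    (hinv : ∀ t ∈ I, ∀ z, (ω₀ z + t • (ω₁ z - ω₀ z)).IsInvertible) :
    ContDiff ℝ (⊤ : ℕ∞) (fld ω₀ ω₁ l) := by
  have hτ : ContDiff ℝ (⊤ : ℕ∞) Real.smoothTransition := Real.smoothTransition.contDiff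
  have hτ' : ContDiff ℝ (⊤ : ℕ∞) (deriv Real.smoothTransition) := (contDiff_infty_iff_deriv.1 hτ).2
  have hA : ContDiff ℝ (⊤ : ℕ∞)
      (fun p : ℝ × E => ω₀ p.2 + Real.smoothTransition p.1 • (ω₁ p.2 - ω₀ p.2)) :=
    (h₀.comp contDiff_snd).add
      (sm (F := E →L[ℝ] E →L[ℝ] ℝ) (hτ.comp contDiff_fst)
        ((h₁.comp contDiff_snd).sub (h₀.comp contDiff_snd)))
  have hI : ContDiff ℝ (⊤ : ℕ∞) (fun p : ℝ × E => ContinuousLinearMap.inverse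
      (ω₀ p.2 + Real.smoothTransition p.1 • (ω₁ p.2 - ω₀ p.2))) := by
    rw [contDiff_iff_contDiffAt]
    intro p
    exact ((hinv _ ⟨Real.smoothTransition.nonneg p.1, Real.smoothTransition.le_one p.1⟩
      p.2).contDiffAt_map_inverse).comp p hA.contDiffAt
  exact ((hτ'.comp contDiff_fst).smul (hI.clm_apply (hl.comp contDiff_snd))).neg

theorem fld_spec (ω₀ ω₁ : E → E →L[ℝ] E →L[ℝ] ℝ) (l : E → E →L[ℝ] ℝ)
    (hinv : ∀ t ∈ I, ∀ z, (ω₀ z + t • (ω₁ z - ω₀ z)).IsInvertible) (t : ℝ) (z v : E) :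
    ω₀ z (fld ω₀ ω₁ l (t, z)) v + Real.smoothTransition t *
      ((ω₁ z - ω₀ z) (fld ω₀ ω₁ l (t, z)) v) = - (deriv Real.smoothTransition t * l z v) := by
  obtain ⟨e, he⟩ := hinv _ ⟨Real.smoothTransition.nonneg t, Real.smoothTransition.le_one t⟩ z
  have h1 : (ω₀ z + Real.smoothTransition t • (ω₁ z - ω₀ z)) (fld ω₀ ω₁ l (t, z)) =
      - (deriv Real.smoothTransition t • l z) := by
    simp only [fld]
    rw [← he, ContinuousLinearMap.inverse_equiv, map_neg, map_smul]
    simp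
  have h2 := congrArg (fun L : E →L[ℝ] ℝ => L v) h1
  simpa using h2

theorem conserve [CompleteSpace E] (ω₀ η : E → E →L[ℝ] E →L[ℝ] ℝ) (l : E → E →L[ℝ] ℝ)
    (h₀ : ContDiff ℝ (⊤ : ℕ∞) ω₀) (hη : ContDiff ℝ (⊤ : ℕ∞) η) (hl : ContDiff ℝ (⊤ : ℕ∞) l)
    (alt₀ : ∀ z u v, ω₀ z u v = - ω₀ z v u) (altη : ∀ z u v, η z u v = - η z v u)
    (B : Set E)
    (hcl₀ : ∀ z ∈ B, ∀ u v w, fderiv ℝ ω₀ z u v w + fderiv ℝ ω₀ z v w u + fderiv ℝ ω₀ z w u v = 0)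
    (hclη : ∀ z ∈ B, ∀ u v w, fderiv ℝ η z u v w + fderiv ℝ η z v w u + fderiv ℝ η z w u v = 0)
    (hdl : ∀ z ∈ B, ∀ u v, fderiv ℝ l z u v - fderiv ℝ l z v u = η z u v)
    (f : ℝ × E → E) (hf : ContDiff ℝ (⊤ : ℕ∞) f) (τ τ' : ℝ → ℝ) (hτ : ∀ t, HasDerivAt τ (τ' t) t)
    (hspec : ∀ t z v, ω₀ z (f (t, z)) v + τ t * (η z (f (t, z)) v) = - (τ' t * l z v))
    (p a b : ℝ → E) 
    (hpB : ∀ t ∈ I, p t ∈ B)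
    (hp : ∀ t ∈ I, HasDerivWithinAt p (f (t, p t)) I t)
    (ha : ∀ t ∈ I, HasDerivWithinAt a (fderiv ℝ f (t, p t) (0, a t)) I t)
    (hb : ∀ t ∈ I, HasDerivWithinAt b (fderiv ℝ f (t, p t) (0, b t)) I t) :
    ω₀ (p 1) (a 1) (b 1) + τ 1 * η (p 1) (a 1) (b 1) =
      ω₀ (p 0) (a 0) (b 0) + τ 0 * η (p 0) (a 0) (b 0) := by
  have d₀ : ∀ z, HasFDerivAt ω₀ (fderiv ℝ ω₀ z) z := fun z =>
    (h₀.differentiable (by simp) z).hasFDerivAt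
  have dη : ∀ z, HasFDerivAt η (fderiv ℝ η z) z := fun z =>
    (hη.differentiable (by simp) z).hasFDerivAt
  have dl : ∀ z, HasFDerivAt l (fderiv ℝ l z) z := fun z =>
    (hl.differentiable (by simp) z).hasFDerivAt
  -- differentiated defining identity
  have key : ∀ t z w v, fderiv ℝ ω₀ z w (f (t, z)) v + ω₀ z (fderiv ℝ f (t, z) (0, w)) v +
      τ t * (fderiv ℝ η z w (f (t, z)) v + η z (fderiv ℝ f (t, z) (0, w)) v) =
      - (τ' t * fderiv ℝ l z w v) := by
    intro t z w v
    have hL := (line_deriv z w).hasDerivWithinAt (s := univ)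
    have hpath : HasDerivWithinAt (fun r : ℝ => (t, z + r • w)) ((0 : ℝ), w) univ 0 :=
      ((hasDerivAt_const (0:ℝ) t).prodMk (line_deriv z w)).hasDerivWithinAt
    have ez : z + (0:ℝ) • w = z := by rw [zero_smul, add_zero]
    have hfd : HasDerivWithinAt (fun r : ℝ => f (t, z + r • w)) (fderiv ℝ f (t, z) (0, w)) univ 0 := by
      refine path_deriv (E := ℝ × E) (F := E) (η := f) (D := fderiv ℝ f (t, z)) ?_ hpath
      rw [ez]
      exact (hf.differentiable (by simp) _).hasFDerivAt
    have hc : HasDerivWithinAt (fun _ : ℝ => v) 0 univ 0 := (hasDerivAt_const (0:ℝ) v).hasDerivWithinAt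
    have e1 := tri_deriv (D := fderiv ℝ ω₀ z) (by rw [ez]; exact d₀ z) hL hfd hc
    have e2 := tri_deriv (D := fderiv ℝ η z) (by rw [ez]; exact dη z) hL hfd hc
    have e3 : HasDerivWithinAt (fun r : ℝ => l (z + r • w)) (fderiv ℝ l z w) univ 0 := by
      refine path_deriv (F := E →L[ℝ] ℝ) (η := l) (D := fderiv ℝ l z) ?_ hL
      rw [ez]
      exact dl z
    have e4 : HasDerivWithinAt (fun r : ℝ => l (z + r • w) v) (fderiv ℝ l z w v) univ 0 := by
      simpa using e3.clm_apply hc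
    have e5 := e1.add (e2.const_mul (τ t))
    have e6 := (e4.const_mul (τ' t)).neg
    have e7 : HasDerivWithinAt (fun r : ℝ => - (τ' t * l (z + r • w) v)) _ univ 0 := 
      e5.congr (fun r _ => (hspec t _ v).symm) (hspec t _ v).symm
    have e8 := (hasDerivWithinAt_univ.1 e7).unique (hasDerivWithinAt_univ.1 e6)
    simpa [ez] using e8
  let φ : ℝ → ℝ := fun t => ω₀ (p t) (a t) (b t) + τ t * η (p t) (a t) (b t)
  have hφ : ∀ t ∈ I, HasDerivWithinAt φ 0 I t := by
    intro t ht
    have e1 := tri_deriv (d₀ (p t)) (hp t ht) (ha t ht) (hb t ht)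
    have e2 := tri_deriv (dη (p t)) (hp t ht) (ha t ht) (hb t ht)
    have e3 := e1.add ((hτ t).hasDerivWithinAt.mul e2)
    refine e3.congr_deriv ?_
    have k1 := key t (p t) (a t) (b t)
    have k2 := key t (p t) (b t) (a t)
    have c0 := hcl₀ _ (hpB t ht) (f (t, p t)) (a t) (b t)
    have c1 := hclη _ (hpB t ht) (f (t, p t)) (a t) (b t)
    have s0 := fderiv_swap alt₀ (d₀ (p t)) (a t) (f (t, p t)) (b t)
    have s1 := fderiv_swap altη (dη (p t)) (a t) (f (t, p t)) (b t)
    have w0 := alt₀ (p t) (a t) (fderiv ℝ f (t, p t) (0, b t))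
    have w1 := altη (p t) (a t) (fderiv ℝ f (t, p t) (0, b t))
    have dd := hdl _ (hpB t ht) (a t) (b t)
    linear_combination k1 - k2 + c0 + τ t * c1 - s0 - τ t * s1 + w0 + τ t * w1 - τ' t * dd
  have := constant_of_derivWithin_zero (f := φ) (a := 0) (b := 1)
    (fun t ht => (hφ t ht).differentiableWithinAt)
    (fun t ht => (hφ t ⟨ht.1, ht.2.le⟩).derivWithin (uniqueDiffOn_Icc one_pos t ⟨ht.1, ht.2.le⟩))
  exact this 1 (by simp)

end moser
end DW
namespace DW
open Set Filter Topology

set_option linter.unusedSectionVars false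

section glob
variable {X Y : Type} [NormedAddCommGroup X] [NormedSpace ℝ X] [CompleteSpace X]
  [NormedAddCommGroup Y] [NormedSpace ℝ Y] [CompleteSpace Y]

/-- projection on the first factor -/
def Pm (X Y : Type) [NormedAddCommGroup X] [NormedSpace ℝ X]
    [NormedAddCommGroup Y] [NormedSpace ℝ Y] : X × Y →L[ℝ] X × Y :=
  (ContinuousLinearMap.inl ℝ X Y).comp (ContinuousLinearMap.fst ℝ X Y)
/-- projection on the second factor -/
def Qm (X Y : Type) [NormedAddCommGroup X] [NormedSpace ℝ X]
    [NormedAddCommGroup Y] [NormedSpace ℝ Y] : X × Y →L[ℝ] X × Y :=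
  (ContinuousLinearMap.inr ℝ X Y).comp (ContinuousLinearMap.snd ℝ X Y)

theorem Pm_apply (z : X × Y) : Pm X Y z = (z.1, 0) := rfl
theorem Qm_apply (z : X × Y) : Qm X Y z = (0, z.2) := rfl
theorem hm_apply (t : ℝ) (z : X × Y) : t • Pm X Y z + Qm X Y z = (t • z.1, z.2) := by
  simp [Pm_apply, Qm_apply]

theorem hm_norm (t : ℝ) (ht : t ∈ I) (z : X × Y) : ‖t • Pm X Y z + Qm X Y z‖ ≤ ‖z‖ := by
  rw [hm_apply, Prod.norm_def, Prod.norm_def, norm_smul, Real.norm_of_nonneg ht.1]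
  exact max_le_max (mul_le_of_le_one_left (norm_nonneg _) ht.2) le_rfl

theorem fderiv_sub_apply' {E F : Type} [NormedAddCommGroup E] [NormedSpace ℝ E]
    [NormedAddCommGroup F] [NormedSpace ℝ F] (a b : E → F) (z : E)
    (ha : DifferentiableAt ℝ a z) (hb : DifferentiableAt ℝ b z) (u : E) :
    fderiv ℝ (fun z => a z - b z) z u = fderiv ℝ a z u - fderiv ℝ b z u := by
  have : fderiv ℝ (fun z => a z - b z) z = fderiv ℝ a z - fderiv ℝ b z := fderiv_sub ha hb
  rw [this]; rfl

theorem primitive (η : X × Y → X × Y →L[ℝ] X × Y →L[ℝ] ℝ) (hη : ContDiff ℝ (⊤ : ℕ∞) η)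
    (alt : ∀ z u v, η z u v = - η z v u) (r : ℝ)
    (hcl : Closed2FormOn η (Metric.ball 0 r)) (α C : ℝ) (hα : 1 ≤ α) (hC : 0 < C)
    (hclose : ∀ z, ‖η z‖ ≤ C * ‖z.1‖ ^ α) :
    ∃ l : X × Y → X × Y →L[ℝ] ℝ, ContDiff ℝ (⊤ : ℕ∞) l ∧
      (∀ z ∈ Metric.ball 0 r, ∀ u v, fderiv ℝ l z u v - fderiv ℝ l z v u = η z u v) ∧
      ∀ z, ‖l z‖ ≤ C * ‖z.1‖ ^ (α + 1) := by
  have hst : ∀ z ∈ Metric.ball (0 : X × Y) r, ∀ t ∈ I,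
      t • Pm X Y z + Qm X Y z ∈ Metric.ball (0 : X × Y) r := by
    intro z hz t ht
    rw [mem_ball_zero_iff] at hz ⊢
    exact (hm_norm t ht z).trans_lt hz
  have hz0 : ∀ z, η (Qm X Y z) = 0 := by
    intro z
    have := hclose (Qm X Y z)
    rw [Qm_apply, norm_zero, Real.zero_rpow (by linarith), mul_zero] at this
    rw [Qm_apply]
    exact norm_le_zero_iff (E := X × Y →L[ℝ] X × Y →L[ℝ] ℝ) |>.1 this
  obtain ⟨l, h1, h2, h3⟩ := poincare (Pm X Y) (Qm X Y) (fun z => by simp [Pm_apply, Qm_apply]) η hη alt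
    (Metric.ball 0 r) hcl hst hz0
  · refine ⟨l, h1, h2, fun z => h3 z _ ?_⟩
    intro t ht
    have e1 : ‖η (t • Pm X Y z + Qm X Y z)‖ ≤ C * ‖z.1‖ ^ α := by
      refine (hclose _).trans ?_
      rw [hm_apply]
      refine mul_le_mul_of_nonneg_left ?_ hC.le
      refine Real.rpow_le_rpow (norm_nonneg _) ?_ (by linarith)
      rw [norm_smul, Real.norm_of_nonneg ht.1]
      exact mul_le_of_le_one_left (norm_nonneg _) ht.2
    have e2 : ‖Pm X Y z‖ = ‖z.1‖ := by simp [Pm_apply, Prod.norm_def]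
    have e3 : ‖t • Pm X Y + Qm X Y‖ ≤ 1 := by
      refine ContinuousLinearMap.opNorm_le_bound _ zero_le_one fun w => ?_
      rw [one_mul]
      exact hm_norm t ht w
    rw [e2, Real.rpow_add_one' (norm_nonneg _) (by linarith), ← mul_assoc]
    exact (mul_le_of_le_one_right (by positivity) e3).trans
      (mul_le_mul_of_nonneg_right e1 (by positivity))

theorem fld_bound (ω₀ ω₁ : X × Y → X × Y →L[ℝ] X × Y →L[ℝ] ℝ) (l : X × Y → X × Y →L[ℝ] ℝ)
    (α C M : ℝ) (hC : 0 < C) (hl : ∀ z, ‖l z‖ ≤ C * ‖z.1‖ ^ (α + 1))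
    (hM : ∀ t ∈ I, ∀ z, ‖ContinuousLinearMap.inverse (ω₀ z + t • (ω₁ z - ω₀ z))‖ ≤ M) :
    ∃ K, 0 < K ∧ ∀ t ∈ I, ∀ z, ‖fld ω₀ ω₁ l (t, z)‖ ≤ K * ‖z.1‖ ^ (α + 1) := by
  have hτ : ContDiff ℝ (⊤ : ℕ∞) Real.smoothTransition := Real.smoothTransition.contDiff
  have hτ' : ContDiff ℝ (⊤ : ℕ∞) (deriv Real.smoothTransition) := (contDiff_infty_iff_deriv.1 hτ).2
  obtain ⟨T, hT⟩ := isCompact_Icc.exists_bound_of_continuousOn (s := Icc (0:ℝ) 1) hτ'.continuous.continuousOn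
  have hT0 : 0 ≤ T := (norm_nonneg _).trans (hT 0 (by simp))
  have hM0 : 0 ≤ M := le_trans (by positivity) (hM 0 (by simp) 0)
  refine ⟨T * M * C + 1, by positivity, fun t ht z => ?_⟩
  have h2 : ‖ContinuousLinearMap.inverse (ω₀ z + Real.smoothTransition t • (ω₁ z - ω₀ z)) (l z)‖
      ≤ M * (C * ‖z.1‖ ^ (α + 1)) :=
    (ContinuousLinearMap.le_opNorm _ _).trans (mul_le_mul
      (hM _ ⟨Real.smoothTransition.nonneg t, Real.smoothTransition.le_one t⟩ z) (hl z)
      (norm_nonneg _) hM0)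
  have h3 : 0 ≤ ‖z.1‖ ^ (α + 1) := by positivity
  simp only [fld, norm_neg, norm_smul]
  calc _ ≤ T * (M * (C * ‖z.1‖ ^ (α + 1))) := mul_le_mul (hT t ht) h2 (norm_nonneg _) hT0
    _ ≤ _ := by nlinarith

theorem disp_bound (f : ℝ × (X × Y) → X × Y) (hf : ContDiff ℝ (⊤ : ℕ∞) f) (α K : ℝ) (hα : 1 ≤ α)
    (hK : 0 < K) (hfK : ∀ t ∈ I, ∀ z, ‖f (t, z)‖ ≤ K * ‖z.1‖ ^ (α + 1))
    (γ : C(I, X × Y)) (hγ1 : ‖γ‖ ≤ 1) (hγ2 : ‖γ‖ ≤ 1 / (2 * K)) (z : X × Y)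
    (hγ : γ = cst (X × Y) z + J (X × Y) (nem f hf.continuous (gr (X × Y) γ))) :
    ‖γ 1 - z‖ ≤ (K * 2 ^ (α + 1)) * ‖z.1‖ ^ (α + 1) := by
  let x : C(I, X) := ⟨fun s => (γ s).1, by fun_prop⟩
  have hx0 : 0 ≤ ‖x‖ := by positivity
  have hxγ : ‖x‖ ≤ ‖γ‖ := by
    rw [ContinuousMap.norm_le _ (by positivity)]
    intro s
    exact (norm_fst_le (γ s)).trans (γ.norm_coe_le_norm s)
  have h1 : ∀ t : I, ‖γ t - z‖ ≤ K * ‖x‖ ^ (α + 1) := by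
    intro t
    have e1 : γ t - z = ∫ s in (0:ℝ)..t, ext (nem f hf.continuous (gr (X × Y) γ)) s := by
      conv_lhs => rw [hγ]
      rw [ContinuousMap.add_apply, cst_apply, add_sub_cancel_left, J_apply]
    rw [e1]
    have := intervalIntegral.norm_integral_le_of_norm_le_const (a := 0) (b := (t : ℝ))
      (f := ext (nem f hf.continuous (gr (X × Y) γ))) (C := K * ‖x‖ ^ (α + 1)) (by
        intro s _
        simp only [ext, nem_gr_apply]
        refine (hfK _ (projIcc 0 1 zero_le_one s).2 _).trans ?_
        refine mul_le_mul_of_nonneg_left ?_ hK.le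
        exact Real.rpow_le_rpow (norm_nonneg _) (x.norm_coe_le_norm _) (by linarith))
    refine this.trans ?_
    rw [sub_zero, abs_of_nonneg t.2.1]
    exact mul_le_of_le_one_right (by positivity) t.2.2
  have h2 : ‖x‖ ^ (α + 1) ≤ ‖x‖ ^ 2 := by
    rw [← Real.rpow_two]
    exact Real.rpow_le_rpow_of_exponent_ge' hx0 (hxγ.trans hγ1) (by norm_num) (by linarith)
  have h3 : ‖x‖ ≤ ‖z.1‖ + K * ‖x‖ ^ (α + 1) := by
    rw [ContinuousMap.norm_le _ (by positivity)]
    intro t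
    have e1 : ‖x t - z.1‖ ≤ ‖γ t - z‖ := norm_fst_le (γ t - z)
    have e2 := norm_le_norm_add_norm_sub' (x t) z.1
    linarith [h1 t]
  have h4 : ‖x‖ ≤ 2 * ‖z.1‖ := by
    have : K * ‖x‖ ≤ 1 / 2 := by
      calc K * ‖x‖ ≤ K * (1 / (2 * K)) := mul_le_mul_of_nonneg_left (hxγ.trans hγ2) hK.le
        _ = 1 / 2 := by field_simp
    nlinarith
  refine (h1 1).trans ?_
  rw [mul_assoc, ← Real.mul_rpow (by norm_num) (norm_nonneg _)]
  exact mul_le_mul_of_nonneg_left (Real.rpow_le_rpow hx0 h4 (by linarith)) hK.le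

theorem moser_global (ω₀ ω₁ : X × Y → X × Y →L[ℝ] X × Y →L[ℝ] ℝ)
    (h₀ : ContDiff ℝ (⊤ : ℕ∞) ω₀) (h₁ : ContDiff ℝ (⊤ : ℕ∞) ω₁)
    (alt₀ : ∀ z u v, ω₀ z u v = - ω₀ z v u) (alt₁ : ∀ z u v, ω₁ z u v = - ω₁ z v u)
    (r : ℝ) (hr : 0 < r)
    (hcl₀ : Closed2FormOn ω₀ (Metric.ball 0 r)) (hcl₁ : Closed2FormOn ω₁ (Metric.ball 0 r))
    (hinv : ∀ t ∈ I, ∀ z, (ω₀ z + t • (ω₁ z - ω₀ z)).IsInvertible) (M : ℝ)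
    (hM : ∀ t ∈ I, ∀ z, ‖ContinuousLinearMap.inverse (ω₀ z + t • (ω₁ z - ω₀ z))‖ ≤ M)
    (α C : ℝ) (hα : 1 ≤ α) (hC : 0 < C) (hclose : ∀ z, ‖ω₁ z - ω₀ z‖ ≤ C * ‖z.1‖ ^ α) :
    ∃ (V : Set (X × Y)) (ψ : X × Y → X × Y) (C' : ℝ),
      IsOpen V ∧ 0 ∈ V ∧ V ⊆ Metric.ball 0 r ∧ 0 < C' ∧ IsDiffeoOn ψ V (ψ '' V) ∧
      (∀ z ∈ V, ψ z ∈ Metric.ball 0 r) ∧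
      (∀ z ∈ V, ∀ u v, ω₁ (ψ z) (fderiv ℝ ψ z u) (fderiv ℝ ψ z v) = ω₀ z u v) ∧
      (∀ z ∈ V, ‖ψ z - z‖ ≤ C' * ‖z.1‖ ^ (α + 1)) := by
  let η : X × Y → X × Y →L[ℝ] X × Y →L[ℝ] ℝ := fun z => ω₁ z - ω₀ z
  have hη : ContDiff ℝ (⊤ : ℕ∞) η := h₁.sub h₀
  have altη : ∀ z u v, η z u v = - η z v u := by
    intro z u v
    simp only [η, sub_apply]
    rw [alt₀, alt₁]; ring
  have hclη : Closed2FormOn η (Metric.ball 0 r) := by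
    intro z hz u v w
    have hd : ∀ u, fderiv ℝ η z u = fderiv ℝ ω₁ z u - fderiv ℝ ω₀ z u :=
      fderiv_sub_apply' (F := X × Y →L[ℝ] X × Y →L[ℝ] ℝ) ω₁ ω₀ z
        (h₁.differentiable (by simp) z) (h₀.differentiable (by simp) z)
    rw [hd, hd, hd]
    simp only [sub_apply]
    linarith [hcl₀ z hz u v w, hcl₁ z hz u v w]
  obtain ⟨l, hl, hdl, hlb⟩ := primitive η hη altη r hclη α C hα hC hclose
  have hf := fld_contDiff ω₀ ω₁ l h₀ h₁ hl hinv
  obtain ⟨K, hK, hfK⟩ := fld_bound ω₀ ω₁ l α C M hC hlb hM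
  have hspec := fld_spec ω₀ ω₁ l hinv
  set f := fld ω₀ ω₁ l with hfdef
  have hρ : 0 < min r (min 1 (1 / (2 * K))) := by positivity
  obtain ⟨V₀, Γ, hVo, hV0, hΓ, hΓρ, hΓeq, hΓ0⟩ := flow f hf K (by
    intro t ht z hz
    refine (hfK t ht z).trans (mul_le_mul_of_nonneg_left ?_ hK.le)
    rw [← Real.rpow_two]
    refine (Real.rpow_le_rpow (norm_nonneg _) (norm_fst_le z) (by linarith)).trans ?_
    exact Real.rpow_le_rpow_of_exponent_ge' (norm_nonneg _) hz (by norm_num) (by linarith)) _ hρ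
  let ev : C(I, X × Y) →L[ℝ] X × Y := ContinuousMap.evalCLM ℝ (1 : I)
  let ψ : X × Y → X × Y := fun z => ev (Γ z)
  have hψ : ContDiffOn ℝ (⊤ : ℕ∞) ψ V₀ := ev.contDiff.comp_contDiffOn hΓ
  have hψ0 : HasFDerivAt ψ ((ContinuousLinearEquiv.refl ℝ (X × Y)) : X × Y →L[ℝ] X × Y) 0 := by
    have := ev.hasFDerivAt.comp (0 : X × Y) hΓ0
    exact this
  have hψd : ∀ z ∈ V₀, ∀ u, fderiv ℝ ψ z u = fderiv ℝ Γ z u 1 := by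
    intro z hz u
    have h1 : HasFDerivAt Γ (fderiv ℝ Γ z) z :=
      ((hΓ.contDiffAt (hVo.mem_nhds hz)).differentiableAt (by simp)).hasFDerivAt
    have h2 : HasFDerivAt ψ (ev.comp (fderiv ℝ Γ z)) z := ev.hasFDerivAt.comp z h1
    rw [h2.fderiv]
    rfl
  obtain ⟨g, hg0, hgU, hgψ, hgs, -⟩ := local_inv ψ (V₀ ∩ Metric.ball 0 r)
    (hVo.inter Metric.isOpen_ball) (hψ.mono inter_subset_left) 0
    ⟨hV0, Metric.mem_ball_self hr⟩ _ hψ0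
  have hgV : ∀ z ∈ g.source, z ∈ V₀ := fun z hz => (hgU hz).1
  have himg : ψ '' g.source = g.target := by
    rw [← g.image_source_eq_target]
    exact image_congr fun z _ => (hgψ z).symm
  have hball : ∀ z ∈ V₀, ∀ t : I, Γ z t ∈ Metric.ball 0 r := by
    intro z hz t
    rw [mem_ball_zero_iff]
    exact (ContinuousMap.norm_coe_le_norm _ t).trans_lt ((hΓρ z hz).trans_le (min_le_left _ _))
  refine ⟨g.source, ψ, K * 2 ^ (α + 1), g.open_source, hg0, fun z hz => (hgU hz).2, by positivity,
    ⟨hψ.mono hgV, ?_, g.symm, by rwa [himg], ?_⟩, fun z hz => hball z (hgV z hz) 1, ?_, ?_⟩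
  · refine InjOn.bijOn_image ?_
    intro a ha b hb hab
    rw [← hgψ, ← hgψ] at hab
    exact g.injOn ha hb hab
  · rw [himg]
    refine ⟨fun z hz => ?_, fun z hz => ?_⟩
    · rw [← hgψ]; exact g.left_inv hz
    · rw [← hgψ]; exact g.right_inv hz
  · intro z hz' u v
    have hz := hgV z hz'
    rw [hψd z hz, hψd z hz]
    have hp0 : ∀ (c : X × Y) (g h : C(I, X × Y)), g = cst (X × Y) c + J (X × Y) h → ext g 0 = c := by
      intro c g h hg
      rw [ext_of_mem g (by simp), hg, ContinuousMap.add_apply, cst_apply, J_apply]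
      simp
    have h1 : ∀ g : C(I, X × Y), ext g 1 = g 1 := fun g => ext_of_mem g (by simp)
    have du := fun u => deriv_eq f hf V₀ hVo Γ hΓ hΓeq z hz u
    have hda : ∀ u, ∀ t ∈ I, HasDerivWithinAt (ext (fderiv ℝ Γ z u))
        (fderiv ℝ f (t, ext (Γ z) t) (0, ext (fderiv ℝ Γ z u) t)) I t := by
      intro u t ht
      have := hasDeriv_of_eq _ _ u (du u) ⟨t, ht⟩
      rw [evB_apply, nem_gr_apply] at this
      rw [ext_of_mem (Γ z) ht, ext_of_mem (fderiv ℝ Γ z u) ht]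
      exact this
    have main := conserve ω₀ η l h₀ hη hl alt₀ altη (Metric.ball 0 r) hcl₀ hclη hdl f hf
      Real.smoothTransition (deriv Real.smoothTransition)
      (fun t => ((Real.smoothTransition.contDiff (n := 1)).differentiable (by simp) t).hasDerivAt)
      hspec (ext (Γ z)) (ext (fderiv ℝ Γ z u)) (ext (fderiv ℝ Γ z v))
      (fun t ht => hball z hz _)
      (by
        intro t ht
        have := hasDeriv_of_eq _ _ z (hΓeq z hz) ⟨t, ht⟩
        rw [nem_gr_apply] at this
        rw [ext_of_mem (Γ z) ht]
        exact this)
      (hda u) (hda v)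
    rw [hp0 z _ _ (hΓeq z hz), hp0 u _ _ (du u), hp0 v _ _ (du v), h1, h1, h1,
      Real.smoothTransition.zero, Real.smoothTransition.one] at main
    have hψΓ : ψ z = Γ z 1 := rfl
    rw [hψΓ]
    simpa [η] using main
  · intro z hz'
    have hz := hgV z hz'
    have hb := (hΓρ z hz).le
    exact disp_bound f hf α K hα hK hfK (Γ z) (hb.trans ((min_le_right _ _).trans (min_le_left _ _)))
      (hb.trans ((min_le_right _ _).trans (min_le_right _ _))) z (hΓeq z hz)

end glob
end DW

namespace DW
open Set Filter Topology

section loc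

theorem good_ball {E G : Type} [NormedAddCommGroup E] [NormedSpace ℝ E] [CompleteSpace E]
    [NormedAddCommGroup G] [NormedSpace ℝ G] (B : E →L[ℝ] G) (hB : B.IsInvertible) :
    ∃ δ M : ℝ, 0 < δ ∧ ∀ A ∈ Metric.ball B δ,
      A.IsInvertible ∧ ‖ContinuousLinearMap.inverse A‖ ≤ M := by
  obtain ⟨e, rfl⟩ := hB
  have h1 : ∀ᶠ A in 𝓝 (e : E →L[ℝ] G), A.IsInvertible := by
    filter_upwards [e.nhds] with A hA
    exact hA
  have h2 : ContinuousAt (fun A : E →L[ℝ] G => ‖ContinuousLinearMap.inverse A‖) (e : E →L[ℝ] G) :=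
    (contDiffAt_map_inverse (n := 0) e).continuousAt.norm
  have h3 := h2.eventually (gt_mem_nhds (lt_add_one _))
  obtain ⟨δ, hδ, h⟩ := Metric.eventually_nhds_iff_ball.1 (h1.and h3)
  exact ⟨δ, _, hδ, fun A hA => ⟨(h A hA).1, (h A hA).2.le⟩⟩

theorem inv_of_nondeg {E : Type} [NormedAddCommGroup E] [NormedSpace ℝ E] [FiniteDimensional ℝ E]
    (B : E →L[ℝ] E →L[ℝ] ℝ) (h : ∀ u, (∀ v, B u v = 0) → u = 0) : B.IsInvertible := by
  have hinj : Function.Injective (B : E →ₗ[ℝ] (E →L[ℝ] ℝ)) := by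
    rw [injective_iff_map_eq_zero]
    intro u hu
    refine h u fun v => ?_
    have : B u = 0 := hu
    rw [this]; rfl
  have e : (E →ₗ[ℝ] ℝ) ≃ₗ[ℝ] (E →L[ℝ] ℝ) := LinearMap.toContinuousLinearMap
  have hfd : FiniteDimensional ℝ (E →L[ℝ] ℝ) := e.finiteDimensional
  have hrk : Module.finrank ℝ E = Module.finrank ℝ (E →L[ℝ] ℝ) := by
    rw [← e.finrank_eq]
    exact (Subspace.dual_finrank_eq (K := ℝ) (V := E)).symm
  let L := LinearMap.linearEquivOfInjective (B : E →ₗ[ℝ] (E →L[ℝ] ℝ)) hinj hrk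
  refine ⟨L.toContinuousLinearEquiv, ?_⟩
  ext u v
  rfl

theorem cut_contDiff {E F : Type} [NormedAddCommGroup E] [NormedSpace ℝ E] [HasContDiffBump E]
    [NormedAddCommGroup F] [NormedSpace ℝ F] (W : Set E) (hW : IsOpen W) (ω : E → F)
    (hω : ContDiffOn ℝ (⊤ : ℕ∞) ω W) (B : F) (χ : ContDiffBump (0 : E))
    (hχ : Metric.closedBall 0 χ.rOut ⊆ W) :
    ContDiff ℝ (⊤ : ℕ∞) (fun z => B + χ z • (ω z - B)) := by
  rw [contDiff_iff_contDiffAt]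
  intro z
  by_cases hz : z ∈ W
  · exact contDiffAt_const.add (χ.contDiffAt.smul
      ((hω.contDiffAt (hW.mem_nhds hz)).sub contDiffAt_const))
  · have hz' : z ∈ (Metric.closedBall (0 : E) χ.rOut)ᶜ := fun h => hz (hχ h)
    refine (contDiffAt_const (c := B)).congr_of_eventuallyEq ?_
    filter_upwards [Metric.isClosed_closedBall.isOpen_compl.mem_nhds hz'] with y hy
    rw [χ.zero_of_le_dist (le_of_lt (by simpa using hy)), zero_smul, add_zero]

theorem cut_one {F : Type} [NormedAddCommGroup F] [NormedSpace ℝ F] (B a : F) (χ : ℝ)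
    (hχ : χ = 1) : B + χ • (a - B) = a := by
  rw [hχ, one_smul, add_sub_cancel]

theorem cut_mem {F : Type} [NormedAddCommGroup F] [NormedSpace ℝ F] (B a b : F) (δ χ t : ℝ)
    (hδ : 0 < δ) (ha' : χ ≠ 0 → a ∈ Metric.ball B δ) (hb' : χ ≠ 0 → b ∈ Metric.ball B δ)
    (hχ : χ ∈ Icc (0 : ℝ) 1)
    (ht : t ∈ Icc (0 : ℝ) 1) :
    (B + χ • (a - B)) + t • ((B + χ • (b - B)) - (B + χ • (a - B))) ∈ Metric.ball B δ := by
  have hB : B ∈ Metric.ball B δ := Metric.mem_ball_self hδ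
  by_cases h0 : χ = 0
  · simpa [h0] using hδ
  have ha := ha' h0
  have hb := hb' h0
  have hc := convex_ball B δ
  have h1 := hc.add_smul_sub_mem hB ha hχ
  have h2 := hc.add_smul_sub_mem hB hb hχ
  exact hc.add_smul_sub_mem h1 h2 ht

theorem cut_sub {F : Type} [NormedAddCommGroup F] [NormedSpace ℝ F] (B a b : F) (χ c : ℝ)
    (hχ : χ ∈ Icc (0 : ℝ) 1) (h : χ ≠ 0 → ‖b - a‖ ≤ c) (hc : 0 ≤ c) :
    ‖(B + χ • (b - B)) - (B + χ • (a - B))‖ ≤ c := by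
  have : (B + χ • (b - B)) - (B + χ • (a - B)) = χ • (b - a) := by module
  rw [this, norm_smul, Real.norm_of_nonneg hχ.1]
  by_cases h0 : χ = 0
  · simpa [h0] using hc
  · exact (mul_le_of_le_one_left (norm_nonneg _) hχ.2).trans (h h0)

theorem antisym {E : Type} [NormedAddCommGroup E] [NormedSpace ℝ E]
    (B : E →L[ℝ] E →L[ℝ] ℝ) (h : ∀ u, B u u = 0) (u v : E) : B u v = - B v u := by
  have := h (u + v)
  simp only [map_add, add_apply, h] at this
  linarith

theorem cut_antisym {E : Type} [NormedAddCommGroup E] [NormedSpace ℝ E]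
    (B A : E →L[ℝ] E →L[ℝ] ℝ) (χ : ℝ) (h : ∀ u, B u u = 0) (hA : χ ≠ 0 → ∀ u, A u u = 0) (u v : E) :
    (B + χ • (A - B)) u v = - (B + χ • (A - B)) v u := by
  refine antisym _ (fun w => ?_) u v
  by_cases h0 : χ = 0
  · simp [h0, h]
  · simp [h, hA h0]

theorem cut_closed {E : Type} [NormedAddCommGroup E] [NormedSpace ℝ E]
    (ω ω' : E → E →L[ℝ] E →L[ℝ] ℝ) (W U : Set E) (hU : IsOpen U) (hUW : U ⊆ W)
    (h : ∀ z ∈ U, ω' z = ω z) (hcl : Closed2FormOn ω W) : Closed2FormOn ω' U := by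
  intro z hz u v w
  have : ω' =ᶠ[𝓝 z] ω := by
    filter_upwards [hU.mem_nhds hz] with y hy using h y hy
  rw [this.fderiv_eq]
  exact hcl z (hUW hz) u v w

end loc

theorem main {X Y : Type} [NormedAddCommGroup X] [NormedSpace ℝ X] [FiniteDimensional ℝ X]
    [NormedAddCommGroup Y] [NormedSpace ℝ Y] [FiniteDimensional ℝ Y]
    (W : Set (X × Y)) (hW : IsOpen W) (h0 : (0 : X × Y) ∈ W)
    (ω₀ ω₁ : X × Y → X × Y →L[ℝ] X × Y →L[ℝ] ℝ)
    (hsm₀ : ContDiffOn ℝ (⊤ : ℕ∞) ω₀ W) (hsm₁ : ContDiffOn ℝ (⊤ : ℕ∞) ω₁ W)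
    (halt₀ : ∀ z ∈ W, ∀ u, ω₀ z u u = 0) (halt₁ : ∀ z ∈ W, ∀ u, ω₁ z u u = 0)
    (hcl₀ : Closed2FormOn ω₀ W) (hcl₁ : Closed2FormOn ω₁ W)
    (hnd₀ : ∀ z ∈ W, ∀ u, (∀ v, ω₀ z u v = 0) → u = 0)
    (α : ℝ) (hα : 1 ≤ α) (C : ℝ) (hC : 0 < C)
    (hclose : ∀ z ∈ W, ‖ω₁ z - ω₀ z‖ ≤ C * ‖z.1‖ ^ α) :
    ∃ (V : Set (X × Y)) (ψ : X × Y → X × Y) (C' : ℝ),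
      IsOpen V ∧ (0 : X × Y) ∈ V ∧ V ⊆ W ∧ 0 < C' ∧
      IsDiffeoOn ψ V (ψ '' V) ∧
      (∀ z ∈ V, ∀ u v : X × Y,
        ω₁ (ψ z) (fderiv ℝ ψ z u) (fderiv ℝ ψ z v) = ω₀ z u v) ∧
      (∀ z ∈ V, ‖ψ z - z‖ ≤ C' * ‖z.1‖ ^ (α + 1)) := by
  have : CompleteSpace X := FiniteDimensional.complete ℝ X
  have : CompleteSpace Y := FiniteDimensional.complete ℝ Y
  have hB1 : ω₁ 0 = ω₀ 0 := by
    have := hclose 0 h0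
    rw [Prod.fst_zero, norm_zero, Real.zero_rpow (by linarith), mul_zero] at this
    exact sub_eq_zero.1 (norm_le_zero_iff (E := X × Y →L[ℝ] X × Y →L[ℝ] ℝ) |>.1 this)
  set B := ω₀ 0 with hBdef
  have hBalt := halt₀ 0 h0
  obtain ⟨δ, M, hδ, hgood⟩ := good_ball (E := X × Y) (G := X × Y →L[ℝ] ℝ) B
    (inv_of_nondeg B (hnd₀ 0 h0))
  have c0 : ∀ᶠ z in 𝓝 (0 : X × Y), ω₀ z ∈ Metric.ball B δ :=
    (hsm₀.continuousOn.continuousAt (hW.mem_nhds h0)).eventually (Metric.ball_mem_nhds _ hδ)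
  have c1 : ∀ᶠ z in 𝓝 (0 : X × Y), ω₁ z ∈ Metric.ball B δ :=
    (hsm₁.continuousOn.continuousAt (hW.mem_nhds h0)).eventually
      (by rw [hB1]; exact Metric.ball_mem_nhds _ hδ)
  obtain ⟨R, hR, hball⟩ := Metric.nhds_basis_closedBall.eventually_iff.1
    ((hW.eventually_mem h0).and (c0.and c1))
  let χ : ContDiffBump (0 : X × Y) := ⟨R / 2, R, by positivity, by linarith⟩
  have hχI : ∀ z, χ z ∈ Icc (0 : ℝ) 1 := fun z => ⟨χ.nonneg, χ.le_one⟩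
  have hχ0 : ∀ z, χ z ≠ 0 → z ∈ Metric.closedBall (0 : X × Y) R := by
    intro z hz
    by_contra hcon
    exact hz (χ.zero_of_le_dist (le_of_lt (by simpa using hcon)))
  have hχ1 : ∀ z ∈ Metric.ball (0 : X × Y) (R / 2), χ z = 1 := fun z hz =>
    χ.one_of_mem_closedBall (Metric.ball_subset_closedBall hz)
  let w₀ : X × Y → X × Y →L[ℝ] X × Y →L[ℝ] ℝ := fun z => B + χ z • (ω₀ z - B)
  let w₁ : X × Y → X × Y →L[ℝ] X × Y →L[ℝ] ℝ := fun z => B + χ z • (ω₁ z - B)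
  have e0 : ∀ z ∈ Metric.ball (0 : X × Y) (R / 2), w₀ z = ω₀ z := by
    intro z hz
    exact cut_one (F := X × Y →L[ℝ] X × Y →L[ℝ] ℝ) B (ω₀ z) (χ z) (hχ1 z hz)
  have e1 : ∀ z ∈ Metric.ball (0 : X × Y) (R / 2), w₁ z = ω₁ z := by
    intro z hz
    exact cut_one (F := X × Y →L[ℝ] X × Y →L[ℝ] ℝ) B (ω₁ z) (χ z) (hχ1 z hz)
  have hbW : Metric.ball (0 : X × Y) (R / 2) ⊆ W := fun z hz =>
    (hball (Metric.ball_subset_closedBall (Metric.ball_subset_ball (by linarith) hz))).1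
  have hcW : Metric.closedBall (0 : X × Y) χ.rOut ⊆ W := fun z hz => (hball hz).1
  have hmem : ∀ t ∈ I, ∀ z, w₀ z + t • (w₁ z - w₀ z) ∈ Metric.ball B δ := by
    intro t ht z
    exact cut_mem (F := X × Y →L[ℝ] X × Y →L[ℝ] ℝ) B (ω₀ z) (ω₁ z) δ (χ z) t hδ
      (fun hz => (hball (hχ0 z hz)).2.1) (fun hz => (hball (hχ0 z hz)).2.2) (hχI z) ht
  obtain ⟨V, ψ, C', hVo, hV0, hVb, hC', hdiff, hψb, hpull, hbd⟩ := moser_global w₀ w₁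
    (cut_contDiff (F := X × Y →L[ℝ] X × Y →L[ℝ] ℝ) W hW ω₀ hsm₀ B χ hcW)
    (cut_contDiff (F := X × Y →L[ℝ] X × Y →L[ℝ] ℝ) W hW ω₁ hsm₁ B χ hcW)
    (fun z => cut_antisym B (ω₀ z) (χ z) hBalt fun hz => halt₀ z (hball (hχ0 z hz)).1)
    (fun z => cut_antisym B (ω₁ z) (χ z) hBalt fun hz => halt₁ z (hball (hχ0 z hz)).1)
    (R / 2) (by positivity)
    (cut_closed ω₀ w₀ W _ Metric.isOpen_ball hbW e0 hcl₀)
    (cut_closed ω₁ w₁ W _ Metric.isOpen_ball hbW e1 hcl₁)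
    (fun t ht z => (hgood _ (hmem t ht z)).1) M (fun t ht z => (hgood _ (hmem t ht z)).2)
    α C hα hC
    (fun z => cut_sub (F := X × Y →L[ℝ] X × Y →L[ℝ] ℝ) B (ω₀ z) (ω₁ z) (χ z) _ (hχI z)
      (fun hz => hclose z (hball (hχ0 z hz)).1) (by positivity))
  refine ⟨V, ψ, C', hVo, hV0, hVb.trans hbW, hC', hdiff, fun z hz u v => ?_, hbd⟩
  rw [← e1 _ (hψb z hz), ← e0 z (hVb hz)]
  exact hpull z hz u v

end DW

/-- Darboux–Weinstein theorem: if two smooth closed non-degenerate 2-forms `ω₀`,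
`ω₁` on a neighborhood of `0` in `ℝ^d = ℝ^k_x × ℝ^{d−k}_y` agree to order
`O(|x|^α)`, then there is a local diffeomorphism `ψ` with `ψ*ω₁ = ω₀` and
`ψ = Id + O(|x|^{α+1})`. -/
theorem darboux_weinstein {k m : ℕ}
    (W : Set ((Fin k → ℝ) × (Fin m → ℝ))) (hW : IsOpen W)
    (h0 : (0 : (Fin k → ℝ) × (Fin m → ℝ)) ∈ W)
    (ω₀ ω₁ : ((Fin k → ℝ) × (Fin m → ℝ)) →
      (((Fin k → ℝ) × (Fin m → ℝ)) →L[ℝ] ((Fin k → ℝ) × (Fin m → ℝ)) →L[ℝ] ℝ))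
    (hsm₀ : ContDiffOn ℝ (⊤ : ℕ∞) ω₀ W) (hsm₁ : ContDiffOn ℝ (⊤ : ℕ∞) ω₁ W)
    (halt₀ : ∀ z ∈ W, ∀ u, ω₀ z u u = 0) (halt₁ : ∀ z ∈ W, ∀ u, ω₁ z u u = 0)
    (hcl₀ : Closed2FormOn ω₀ W) (hcl₁ : Closed2FormOn ω₁ W)
    (hnd₀ : ∀ z ∈ W, ∀ u, (∀ v, ω₀ z u v = 0) → u = 0)
    (hnd₁ : ∀ z ∈ W, ∀ u, (∀ v, ω₁ z u v = 0) → u = 0)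
    (α : ℝ) (hα : 1 ≤ α) (C : ℝ) (hC : 0 < C)
    (hclose : ∀ z ∈ W, ‖ω₁ z - ω₀ z‖ ≤ C * ‖z.1‖ ^ α) :
    ∃ (V : Set ((Fin k → ℝ) × (Fin m → ℝ)))
      (ψ : ((Fin k → ℝ) × (Fin m → ℝ)) → ((Fin k → ℝ) × (Fin m → ℝ))) (C' : ℝ),
      IsOpen V ∧ (0 : (Fin k → ℝ) × (Fin m → ℝ)) ∈ V ∧ V ⊆ W ∧ 0 < C' ∧
      IsDiffeoOn ψ V (ψ '' V) ∧
      (∀ z ∈ V, ∀ u v : (Fin k → ℝ) × (Fin m → ℝ),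
        ω₁ (ψ z) (fderiv ℝ ψ z u) (fderiv ℝ ψ z v) = ω₀ z u v) ∧
      (∀ z ∈ V, ‖ψ z - z‖ ≤ C' * ‖z.1‖ ^ (α + 1)) := by
  exact DW.main W hW h0 ω₀ ω₁ hsm₀ hsm₁ halt₀ halt₁ hcl₀ hcl₁ hnd₀ α hα C hC hclose
end
end

section
/- (Relative Poincaré lemma with vanishing order, from the proof of the Darboux–Weinstein theorem.) Split ℝ^d = ℝ^k_x × ℝ^{d−k}_y. Let τ be a smooth map from a neighborhood of 0 in ℝ^d, star-shaped in the x-variable (i.e. (tx,y) belongs to it whenever (x,y) does and t ∈ [0,1]), into the alternating bilinear forms on ℝ^d. Assume τ is closed, i.e. Dτ(z)[u](v,w) + Dτ(z)[v](w,u) + Dτ(z)[w](u,v) = 0 for all z in the neighborhood and u,v,w ∈ ℝ^d, and assume there are α ≥ 1 and C > 0 with ‖τ(x,y)‖ ≤ C|x|^α on the neighborhood. Then there exist a smooth map σ from (possibly a smaller such) neighborhood of 0 into the linear forms on ℝ^d and a constant C' > 0 such that for all z = (x,y): Dσ(z)[u](v) − Dσ(z)[v](u) = τ(z)(u,v) for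 all u,v ∈ ℝ^d (i.e. dσ = τ), and ‖σ(x,y)‖ ≤ C'|x|^{α+1}. -/
noncomputable section

open Set Filter Topology MeasureTheory
open scoped Interval

theorem param_hasFDerivAt {E G : Type} [NormedAddCommGroup E] [NormedSpace ℝ E]
    [FiniteDimensional ℝ E] [NormedAddCommGroup G] [NormedSpace ℝ G] [CompleteSpace G]
    {W : Set E} (hW : IsOpen W) {U : Set (E × ℝ)} (hU : IsOpen U)
    (hWU : ∀ z ∈ W, ∀ t ∈ Icc (0 : ℝ) 1, (z, t) ∈ U) {F : E × ℝ → G}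
    (hF : ContDiffOn ℝ (⊤ : ℕ∞) F U) {z : E} (hz : z ∈ W) :
    HasFDerivAt (fun z => ∫ t in (0 : ℝ)..1, F (z, t))
      (∫ t in (0 : ℝ)..1, (fderiv ℝ F (z, t)).comp (ContinuousLinearMap.inl ℝ E ℝ)) z := by
  have : ProperSpace E := FiniteDimensional.proper ℝ E
  obtain ⟨K, hK, hzK, hKW⟩ := exists_compact_subset hW hz
  have hc : ContinuousOn F U := hF.continuousOn
  have hdc : ContinuousOn (fderiv ℝ F) U := hF.continuousOn_fderiv_of_isOpen hU (by simp)
  have hcc : ContinuousOn (fun p => (fderiv ℝ F p).comp (ContinuousLinearMap.inl ℝ E ℝ)) U :=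
    hdc.clm_comp continuousOn_const
  have hsl : ∀ y ∈ W, ContinuousOn (fun t : ℝ => (y, t)) (Icc 0 1) := fun y _ => by fun_prop
  have hmaps : ∀ y ∈ W, MapsTo (fun t : ℝ => (y, t)) (Icc 0 1) U := fun y hy t ht => hWU y hy t ht
  obtain ⟨M, hM⟩ := (hK.prod (isCompact_Icc (a := (0 : ℝ)) (b := 1))).exists_bound_of_continuousOn
    (hcc.mono (fun p hp => hWU p.1 (hKW hp.1) p.2 hp.2))
  have huI : Ι (0 : ℝ) 1 ⊆ Icc 0 1 := by
    rw [uIoc_of_le zero_le_one]; exact Ioc_subset_Icc_self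
  refine intervalIntegral.hasFDerivAt_integral_of_dominated_of_fderiv_le (bound := fun _ => M)
    (F := fun z t => F (z, t))
    (F' := fun z t => (fderiv ℝ F (z, t)).comp (ContinuousLinearMap.inl ℝ E ℝ))
    (s := K) (mem_interior_iff_mem_nhds.1 hzK) ?_ ?_ ?_ ?_ ?_ ?_
  · filter_upwards [hW.mem_nhds hz] with y hy
    exact ((hc.comp (hsl y hy) (hmaps y hy)).mono huI).aestronglyMeasurable measurableSet_uIoc
  · apply ContinuousOn.intervalIntegrable
    rw [uIcc_of_le zero_le_one]
    exact hc.comp (hsl z hz) (hmaps z hz)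
  · exact ((hcc.comp (hsl z hz) (hmaps z hz)).mono huI).aestronglyMeasurable measurableSet_uIoc
  · exact Eventually.of_forall fun t ht y hy => hM (y, t) ⟨hy, huI ht⟩
  · exact intervalIntegrable_const
  · refine Eventually.of_forall fun t ht y hy => ?_
    have h1 : HasFDerivAt F (fderiv ℝ F (y, t)) (y, t) :=
      ((hF.differentiableOn (by simp)).differentiableAt
        (hU.mem_nhds (hWU y (hKW hy) t (huI ht)))).hasFDerivAt
    exact h1.comp y (hasFDerivAt_prodMk_left y t)

theorem param_contDiffOn_nat {E : Type} [NormedAddCommGroup E] [NormedSpace ℝ E]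
    [FiniteDimensional ℝ E]
    {W : Set E} (hW : IsOpen W) {U : Set (E × ℝ)} (hU : IsOpen U)
    (hWU : ∀ z ∈ W, ∀ t ∈ Icc (0 : ℝ) 1, (z, t) ∈ U) (n : ℕ) :
    ∀ (G : Type) [NormedAddCommGroup G] [NormedSpace ℝ G] [CompleteSpace G] (F : E × ℝ → G),
      ContDiffOn ℝ (⊤ : ℕ∞) F U →
      ContDiffOn ℝ n (fun z => ∫ t in (0 : ℝ)..1, F (z, t)) W := by
  induction n with
  | zero =>
    intro G _ _ _ F hF
    refine contDiffOn_zero.2 fun z hz => ?_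
    exact (param_hasFDerivAt hW hU hWU hF hz).continuousAt.continuousWithinAt
  | succ n ih =>
    intro G _ _ _ F hF
    push_cast
    refine (contDiffOn_succ_iff_fderiv_of_isOpen hW).2 ⟨fun z hz =>
      (param_hasFDerivAt hW hU hWU hF hz).differentiableAt.differentiableWithinAt, by simp, ?_⟩
    have h2 : ContDiffOn ℝ (⊤ : ℕ∞)
        (fun p => (fderiv ℝ F p).comp (ContinuousLinearMap.inl ℝ E ℝ)) U :=
      (hF.fderiv_of_isOpen hU (by simp)).clm_comp contDiffOn_const
    exact (ih _ _ h2).congr fun z hz => (param_hasFDerivAt hW hU hWU hF hz).fderiv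

set_option maxHeartbeats 1000000 in
set_option synthInstance.maxHeartbeats 200000 in
set_option maxSynthPendingDepth 3 in
theorem core_poincare {E : Type} [NormedAddCommGroup E] [NormedSpace ℝ E]
    [FiniteDimensional ℝ E] {W : Set E} (hW : IsOpen W) (PX PY : E →L[ℝ] E)
    (hid : ∀ u, PX u + PY u = u)
    (hstar : ∀ z ∈ W, ∀ t ∈ Icc (0 : ℝ) 1, (t • PX + PY) z ∈ W)
    (τ : E → E →L[ℝ] E →L[ℝ] ℝ)
    (hsm : ContDiffOn ℝ (⊤ : ℕ∞) τ W)
    (halt : ∀ z ∈ W, ∀ u, τ z u u = 0)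
    (hclosed : ∀ z ∈ W, ∀ u v w : E,
      fderiv ℝ τ z u v w + fderiv ℝ τ z v w u + fderiv ℝ τ z w u v = 0)
    (h0 : ∀ z ∈ W, τ (PY z) = 0) (σ : E → E →L[ℝ] ℝ)
    (hσ : σ = fun z => ∫ t in (0 : ℝ)..1, (τ ((t • PX + PY) z) (PX z)).comp (t • PX + PY)) :
    ContDiffOn ℝ (⊤ : ℕ∞) σ W ∧
    ∀ z ∈ W, ∀ u v : E, fderiv ℝ σ z u v - fderiv ℝ σ z v u = τ z u v := by
  set F : E × ℝ → E →L[ℝ] ℝ := fun p =>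
    (τ ((p.2 • PX + PY) p.1) (PX p.1)).comp (p.2 • PX + PY) with hFdef
  set U : Set (E × ℝ) := {p | (p.2 • PX + PY) p.1 ∈ W} with hUdef
  have hA : ContDiff ℝ (⊤ : ℕ∞) (fun p : E × ℝ => p.2 • PX + PY) :=
    (contDiff_snd.smul contDiff_const).add contDiff_const
  have hAz : ContDiff ℝ (⊤ : ℕ∞) (fun p : E × ℝ => (p.2 • PX + PY) p.1) :=
    hA.clm_apply contDiff_fst
  have hU : IsOpen U := hW.preimage hAz.continuous
  have hWU : ∀ z ∈ W, ∀ t ∈ Icc (0 : ℝ) 1, (z, t) ∈ U := hstar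
  have hτA : ContDiffOn ℝ (⊤ : ℕ∞) (fun p : E × ℝ => τ ((p.2 • PX + PY) p.1)) U :=
    hsm.comp hAz.contDiffOn (fun p hp => hp)
  have hF : ContDiffOn ℝ (⊤ : ℕ∞) F U :=
    (hτA.clm_apply (PX.contDiff.comp contDiff_fst).contDiffOn).clm_comp hA.contDiffOn
  have hσ' : σ = fun z => ∫ t in (0 : ℝ)..1, F (z, t) := hσ
  refine ⟨?_, ?_⟩
  · rw [hσ']
    exact contDiffOn_infty.2 fun n => param_contDiffOn_nat hW hU hWU n _ F hF
  intro z hz u v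
  have hτd : ∀ y ∈ W, HasFDerivAt τ (fderiv ℝ τ y) y := fun y hy =>
    ((hsm.differentiableOn (by simp)).differentiableAt (hW.mem_nhds hy)).hasFDerivAt
  -- skew-symmetry of τ and of its derivative
  have hskew : ∀ y ∈ W, ∀ a b, τ y a b = - τ y b a := by
    intro y hy a b
    have h := halt y hy (a + b)
    simp only [map_add, add_apply, halt y hy a, halt y hy b] at h
    linarith
  have hdapp : ∀ y ∈ W, ∀ a b : E,
      HasFDerivAt (fun x => τ x a b) (((fderiv ℝ τ y).flip a).flip b) y := by
    intro y hy a b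
    have := ((hτd y hy).clm_apply (hasFDerivAt_const a y)).clm_apply (hasFDerivAt_const b y)
    refine this.congr_fderiv ?_
    ext w; simp
  have hdskew : ∀ y ∈ W, ∀ w a b, fderiv ℝ τ y w a b = - fderiv ℝ τ y w b a := by
    intro y hy w a b
    have h1 := hdapp y hy a b
    have h2 := (hdapp y hy b a).neg
    have h3 : (fun x => τ x a b) =ᶠ[𝓝 y] (fun x => - τ x b a) := by
      filter_upwards [hW.mem_nhds hy] with x hx using hskew x hx a b
    have h4 := h1.unique (h2.congr_of_eventuallyEq h3)
    simpa using congrArg (fun L => L w) h4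
  -- the derivative of the integrand
  have hFd : ∀ t ∈ Icc (0 : ℝ) 1, ∀ a b : E,
      ((fderiv ℝ F (z, t)).comp (ContinuousLinearMap.inl ℝ E ℝ)) a b =
        fderiv ℝ τ ((t • PX + PY) z) ((t • PX + PY) a) (PX z) ((t • PX + PY) b)
        + τ ((t • PX + PY) z) (PX a) ((t • PX + PY) b) := by
    intro t ht a b
    have h1 : HasFDerivAt F (fderiv ℝ F (z, t)) (z, t) :=
      ((hF.differentiableOn (by simp)).differentiableAt
        (hU.mem_nhds (hWU z hz t ht))).hasFDerivAt
    have h2' : HasFDerivAt (fun z => F (z, t))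
        ((fderiv ℝ F (z, t)).comp (ContinuousLinearMap.inl ℝ E ℝ)) z :=
      HasFDerivAt.comp (g := F) (f := fun e : E => (e, t)) z h1
        (hasFDerivAt_prodMk_left (𝕜 := ℝ) z t)
    have h2 := h2'.clm_apply (hasFDerivAt_const b z)
    have h3' : HasFDerivAt (fun z => τ ((t • PX + PY) z))
        ((fderiv ℝ τ ((t • PX + PY) z)).comp (t • PX + PY)) z :=
      (hτd _ (hstar z hz t ht)).comp z (t • PX + PY).hasFDerivAt
    have h3 := (h3'.clm_apply PX.hasFDerivAt).clm_apply
      (hasFDerivAt_const ((t • PX + PY) b) z)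
    have h4 := congrArg (fun L => L a) (h2.unique h3)
    simp only [_root_.add_apply, ContinuousLinearMap.comp_apply,
      ContinuousLinearMap.flip_apply, ContinuousLinearMap.zero_apply, map_zero, zero_add] at h4 ⊢
    rw [h4]
    ring
  have hcont : ContinuousOn (fun t : ℝ =>
      (fderiv ℝ F (z, t)).comp (ContinuousLinearMap.inl ℝ E ℝ)) (Icc 0 1) := by
    have hdc : ContinuousOn (fderiv ℝ F) U := hF.continuousOn_fderiv_of_isOpen hU (by simp)
    exact (hdc.comp (by fun_prop) (fun t ht => hWU z hz t ht)).clm_comp continuousOn_const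
  have hint : IntervalIntegrable (fun t : ℝ =>
      (fderiv ℝ F (z, t)).comp (ContinuousLinearMap.inl ℝ E ℝ)) volume 0 1 := by
    apply ContinuousOn.intervalIntegrable
    rwa [uIcc_of_le zero_le_one]
  have happ : ∀ a b : E, fderiv ℝ σ z a b = ∫ t in (0 : ℝ)..1,
      ((fderiv ℝ F (z, t)).comp (ContinuousLinearMap.inl ℝ E ℝ)) a b := by
    intro a b
    have hinta : IntervalIntegrable (fun t : ℝ =>
        ((fderiv ℝ F (z, t)).comp (ContinuousLinearMap.inl ℝ E ℝ)) a) volume 0 1 := by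
      apply ContinuousOn.intervalIntegrable
      rw [uIcc_of_le zero_le_one]
      exact hcont.clm_apply continuousOn_const
    rw [hσ', (param_hasFDerivAt hW hU hWU hF hz).fderiv,
      ContinuousLinearMap.intervalIntegral_apply hint,
      ContinuousLinearMap.intervalIntegral_apply hinta]
  have hintab : ∀ a b : E, ContinuousOn (fun t : ℝ =>
      ((fderiv ℝ F (z, t)).comp (ContinuousLinearMap.inl ℝ E ℝ)) a b) (Icc 0 1) := fun a b =>
    (hcont.clm_apply continuousOn_const).clm_apply continuousOn_const
  have hintab' : ∀ a b : E, IntervalIntegrable (fun t : ℝ =>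
      ((fderiv ℝ F (z, t)).comp (ContinuousLinearMap.inl ℝ E ℝ)) a b) volume 0 1 := by
    intro a b
    apply ContinuousOn.intervalIntegrable
    rw [uIcc_of_le zero_le_one]
    exact hintab a b
  rw [happ, happ, ← intervalIntegral.integral_sub (hintab' u v) (hintab' v u)]
  have hA' : ∀ (a : E) (t : ℝ), HasDerivAt (fun t : ℝ => (t • PX + PY) a) (PX a) t := by
    intro a t
    have : HasDerivAt (fun t : ℝ => t • PX a + PY a) ((1 : ℝ) • PX a) t :=
      ((hasDerivAt_id t).smul_const (PX a)).add_const (PY a)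
    simpa using this
  have hftc : ∀ t ∈ uIcc (0 : ℝ) 1, HasDerivAt
      (fun t : ℝ => τ ((t • PX + PY) z) ((t • PX + PY) u) ((t • PX + PY) v))
      (((fderiv ℝ F (z, t)).comp (ContinuousLinearMap.inl ℝ E ℝ)) u v -
        ((fderiv ℝ F (z, t)).comp (ContinuousLinearMap.inl ℝ E ℝ)) v u) t := by
    intro t ht
    rw [uIcc_of_le zero_le_one] at ht
    have hy := hstar z hz t ht
    have h' : HasDerivAt (fun t : ℝ => τ ((t • PX + PY) z))
        (fderiv ℝ τ ((t • PX + PY) z) (PX z)) t :=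
      (hτd _ hy).comp_hasDerivAt t (hA' z t)
    have h := (h'.clm_apply (hA' u t)).clm_apply (hA' v t)
    refine h.congr_deriv ?_
    rw [hFd t ht, hFd t ht]
    have e1 := hclosed _ hy (PX z) ((t • PX + PY) u) ((t • PX + PY) v)
    have e2 := hdskew _ hy ((t • PX + PY) u) (PX z) ((t • PX + PY) v)
    have e3 := hskew _ hy (PX v) ((t • PX + PY) u)
    generalize (t • PX + PY) u = u' at *
    generalize (t • PX + PY) v = v' at *
    generalize (t • PX + PY) z = z' at *
    simp only [_root_.add_apply]
    linarith
  rw [intervalIntegral.integral_eq_sub_of_hasDerivAt hftc ((hintab' u v).sub (hintab' v u))]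
  simp [hid, h0 z hz]

/-- Relative Poincaré lemma with vanishing order: on a neighborhood of `0` in
`ℝ^d = ℝ^k_x × ℝ^{d−k}_y`, star-shaped in the `x`-variable, every smooth closed
2-form `τ` with `‖τ(x,y)‖ ≤ C|x|^α` is the exterior derivative of a smooth 1-form
`σ` with `‖σ(x,y)‖ ≤ C'|x|^{α+1}`. -/
theorem relative_poincare_lemma {k m : ℕ}
    (W : Set ((Fin k → ℝ) × (Fin m → ℝ))) (hW : IsOpen W)
    (h0 : (0 : (Fin k → ℝ) × (Fin m → ℝ)) ∈ W)
    (hstar : ∀ z ∈ W, ∀ t : ℝ, t ∈ Set.Icc (0 : ℝ) 1 →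
      ((t • z.1, z.2) : (Fin k → ℝ) × (Fin m → ℝ)) ∈ W)
    (τ : ((Fin k → ℝ) × (Fin m → ℝ)) →
      (((Fin k → ℝ) × (Fin m → ℝ)) →L[ℝ] ((Fin k → ℝ) × (Fin m → ℝ)) →L[ℝ] ℝ))
    (hsm : ContDiffOn ℝ (⊤ : ℕ∞) τ W)
    (halt : ∀ z ∈ W, ∀ u, τ z u u = 0)
    (hclosed : ∀ z ∈ W, ∀ u v w : (Fin k → ℝ) × (Fin m → ℝ),
      fderiv ℝ τ z u v w + fderiv ℝ τ z v w u + fderiv ℝ τ z w u v = 0)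
    (α : ℝ) (hα : 1 ≤ α) (C : ℝ) (hC : 0 < C)
    (hbound : ∀ z ∈ W, ‖τ z‖ ≤ C * ‖z.1‖ ^ α) :
    ∃ (W' : Set ((Fin k → ℝ) × (Fin m → ℝ)))
      (σ : ((Fin k → ℝ) × (Fin m → ℝ)) → (((Fin k → ℝ) × (Fin m → ℝ)) →L[ℝ] ℝ))
      (C' : ℝ),
      IsOpen W' ∧ (0 : (Fin k → ℝ) × (Fin m → ℝ)) ∈ W' ∧ W' ⊆ W ∧ 0 < C' ∧
      ContDiffOn ℝ (⊤ : ℕ∞) σ W' ∧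
      (∀ z ∈ W', ∀ u v : (Fin k → ℝ) × (Fin m → ℝ),
        fderiv ℝ σ z u v - fderiv ℝ σ z v u = τ z u v) ∧
      (∀ z ∈ W', ‖σ z‖ ≤ C' * ‖z.1‖ ^ (α + 1)) := by
  have _ := h0
  set PX : ((Fin k → ℝ) × (Fin m → ℝ)) →L[ℝ] ((Fin k → ℝ) × (Fin m → ℝ)) :=
    (ContinuousLinearMap.inl ℝ _ _).comp (ContinuousLinearMap.fst ℝ _ _) with hPX
  set PY : ((Fin k → ℝ) × (Fin m → ℝ)) →L[ℝ] ((Fin k → ℝ) × (Fin m → ℝ)) :=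
    (ContinuousLinearMap.inr ℝ _ _).comp (ContinuousLinearMap.snd ℝ _ _) with hPY
  have hA : ∀ (t : ℝ) z, (t • PX + PY) z = (t • z.1, z.2) := by
    intro t z
    simp [hPX, hPY]
  have hst : ∀ z ∈ W, ∀ t ∈ Set.Icc (0 : ℝ) 1, (t • PX + PY) z ∈ W := by
    intro z hz t ht
    rw [hA]
    exact hstar z hz t ht
  obtain ⟨h1, h2⟩ := core_poincare hW PX PY (fun u => by simp [hPX, hPY]) hst τ hsm halt hclosed
    (by
      intro z hz
      have h3 := hst z hz 0 (by simp)
      simp only [zero_smul, zero_add] at h3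
      have h4 := hbound _ h3
      have h5 : (PY z).1 = 0 := by simp [hPY]
      rw [h5, norm_zero, Real.zero_rpow (by linarith), mul_zero] at h4
      exact (ContinuousLinearMap.opNorm_zero_iff _).1 (le_antisymm h4 (ContinuousLinearMap.opNorm_nonneg _))) _ rfl
  refine ⟨W, _, C, hW, h0, subset_rfl, hC, h1, h2, ?_⟩
  intro z hz
  have key : ∀ t ∈ Set.uIoc (0 : ℝ) 1,
      ‖(τ ((t • PX + PY) z) (PX z)).comp (t • PX + PY)‖ ≤ C * ‖z.1‖ ^ (α + 1) := by
    intro t ht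
    rw [Set.uIoc_of_le zero_le_one] at ht
    have ht' : t ∈ Set.Icc (0 : ℝ) 1 := ⟨ht.1.le, ht.2⟩
    have hx : ‖t • z.1‖ ≤ ‖z.1‖ := by
      rw [norm_smul, Real.norm_of_nonneg ht'.1]
      exact mul_le_of_le_one_left (norm_nonneg _) ht'.2
    have hn : ‖t • PX + PY‖ ≤ 1 := by
      refine ContinuousLinearMap.opNorm_le_bound _ zero_le_one fun w => ?_
      rw [hA, one_mul]
      refine max_le ?_ (norm_snd_le w)
      rw [norm_smul, Real.norm_of_nonneg ht'.1]
      exact (mul_le_of_le_one_left (norm_nonneg _) ht'.2).trans (norm_fst_le w)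
    have hp : ‖PX z‖ = ‖z.1‖ := by simp [hPX, Prod.norm_def]
    have hb := hbound _ (hst z hz t ht')
    rw [hA] at hb
    have hb2 : ‖τ (t • z.1, z.2)‖ ≤ C * ‖z.1‖ ^ α :=
      hb.trans (mul_le_mul_of_nonneg_left
        (Real.rpow_le_rpow (norm_nonneg _) hx (by linarith)) hC.le)
    calc ‖(τ ((t • PX + PY) z) (PX z)).comp (t • PX + PY)‖
        ≤ ‖τ ((t • PX + PY) z) (PX z)‖ * ‖t • PX + PY‖ := ContinuousLinearMap.opNorm_comp_le _ _
      _ ≤ ‖τ ((t • PX + PY) z) (PX z)‖ * 1 := mul_le_mul_of_nonneg_left hn (norm_nonneg _)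
      _ ≤ ‖τ ((t • PX + PY) z)‖ * ‖PX z‖ := by
        rw [mul_one]; exact ContinuousLinearMap.le_opNorm _ _
      _ ≤ (C * ‖z.1‖ ^ α) * ‖z.1‖ := by
        rw [hp, hA]; exact mul_le_mul_of_nonneg_right hb2 (norm_nonneg _)
      _ = C * ‖z.1‖ ^ (α + 1) := by
        rw [Real.rpow_add_one' (norm_nonneg _) (by linarith), mul_assoc]
  have := intervalIntegral.norm_integral_le_of_norm_le_const key
  simpa using this
end
end

section
/- Let g be a symmetric positive definite real d×d matrix, defining the inner product g(X,Y) = Xᵀ g Y on ℝ^d, let J be any real d×d matrix, and set 𝐁 = g⁻¹(Jᵀ − J). Let β_1, …, β_s > 0 and let u_1, v_1, …, u_s, v_s ∈ ℝ^d be a g-orthonormal family (g(u_i,u_j) = δ_{ij}, g(v_i,v_j) = δ_{ij}, g(u_i,v_j) = 0 for all i,j) satisfying 𝐁u_i = −β_i v_i and 𝐁v_i = β_i u_i. Define f_i = β_i^{-1/2}(u_i, Jᵀu_i) ∈ ℝ^{2d} and f'_i = β_i^{-1/2}(v_i, Jᵀv_i) ∈ ℝ^{2d}, and let ω₀((Q,P),(Q',P'))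 = ⟨P',Q⟩ − ⟨P,Q'⟩ on ℝ^d × ℝ^d. Then for all 1 ≤ i, j ≤ s: ω₀(f_i, f_j) = 0, ω₀(f'_i, f'_j) = 0, and ω₀(f_i, f'_j) = δ_{ij}. -/
open Matrix

noncomputable section

/-- The standard symplectic form on `ℝ^d × ℝ^d`:
`ω₀((Q,P),(Q',P')) = ⟨P',Q⟩ − ⟨P,Q'⟩`. -/
def omega0 {d : ℕ} (p p' : (Fin d → ℝ) × (Fin d → ℝ)) : ℝ :=
  p'.2 ⬝ᵥ p.1 - p.2 ⬝ᵥ p'.1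

/-- The vectors `f_i = β_i^{-1/2}(u_i, Jᵀu_i)`, `f'_i = β_i^{-1/2}(v_i, Jᵀv_i)` built
from a `g`-orthonormal eigenframe of `𝐁 = g⁻¹(Jᵀ − J)` form a symplectic family:
`ω₀(f_i,f_j) = 0`, `ω₀(f'_i,f'_j) = 0`, `ω₀(f_i,f'_j) = δ_{ij}`. -/
theorem symplectic_frame_of_eigenframe {d s : ℕ}
    (g J : Matrix (Fin d) (Fin d) ℝ)
    (hgs : g.IsSymm) (hgpd : g.PosDef)
    (β : Fin s → ℝ) (hβ : ∀ i, 0 < β i)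
    (u v : Fin s → (Fin d → ℝ))
    (huu : ∀ i j, u i ⬝ᵥ (g *ᵥ u j) = if i = j then 1 else 0)
    (hvv : ∀ i j, v i ⬝ᵥ (g *ᵥ v j) = if i = j then 1 else 0)
    (huv : ∀ i j, u i ⬝ᵥ (g *ᵥ v j) = 0)
    (hBu : ∀ i, (g⁻¹ * (Jᵀ - J)) *ᵥ u i = (-(β i)) • v i)
    (hBv : ∀ i, (g⁻¹ * (Jᵀ - J)) *ᵥ v i = (β i) • u i)
    (f f' : Fin s → (Fin d → ℝ) × (Fin d → ℝ))
    (hf : ∀ i, f i = (Real.sqrt (β i))⁻¹ • ((u i, Jᵀ *ᵥ u i) : (Fin d → ℝ) × (Fin d → ℝ)))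
    (hf' : ∀ i, f' i = (Real.sqrt (β i))⁻¹ • ((v i, Jᵀ *ᵥ v i) : (Fin d → ℝ) × (Fin d → ℝ))) :
    (∀ i j, omega0 (f i) (f j) = 0) ∧
    (∀ i j, omega0 (f' i) (f' j) = 0) ∧
    (∀ i j, omega0 (f i) (f' j) = if i = j then 1 else 0) := by
  have hdet : IsUnit g.det := (Matrix.isUnit_iff_isUnit_det g).1 hgpd.isUnit
  have key : ∀ (a b : ℝ) (x y z : Fin d → ℝ), (g⁻¹ * (Jᵀ - J)) *ᵥ y = z →
      omega0 (a • ((x, Jᵀ *ᵥ x) : (Fin d → ℝ) × (Fin d → ℝ))) (b • (y, Jᵀ *ᵥ y))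
        = a * b * (x ⬝ᵥ (g *ᵥ z)) := by
    intro a b x y z h
    have h1 : g *ᵥ z = Jᵀ *ᵥ y - J *ᵥ y := by
      rw [← h, Matrix.mulVec_mulVec, Matrix.mul_nonsing_inv_cancel_left _ _ hdet,
        Matrix.sub_mulVec]
    have h2 : (Jᵀ *ᵥ x) ⬝ᵥ y = x ⬝ᵥ (J *ᵥ y) := by
      rw [Matrix.mulVec_transpose, Matrix.dotProduct_mulVec]
    have h3 : (Jᵀ *ᵥ y) ⬝ᵥ x = x ⬝ᵥ (Jᵀ *ᵥ y) := dotProduct_comm _ _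
    simp only [omega0, Prod.smul_fst, Prod.smul_snd, smul_dotProduct, dotProduct_smul,
      smul_eq_mul, h1, dotProduct_sub, h2, h3]
    ring
  have hvu : ∀ i j, v i ⬝ᵥ (g *ᵥ u j) = 0 := by
    intro i j
    rw [Matrix.dotProduct_mulVec, ← Matrix.mulVec_transpose, hgs.eq, dotProduct_comm]
    exact huv j i
  refine ⟨fun i j => ?_, fun i j => ?_, fun i j => ?_⟩
  · rw [hf, hf, key _ _ _ _ _ (hBu j), Matrix.mulVec_smul, dotProduct_smul, huv]
    simp
  · rw [hf', hf', key _ _ _ _ _ (hBv j), Matrix.mulVec_smul, dotProduct_smul, hvu]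
    simp
  · rw [hf, hf', key _ _ _ _ _ (hBv j), Matrix.mulVec_smul, dotProduct_smul, huu]
    split_ifs with hij
    · subst hij
      have hs := Real.mul_self_sqrt (hβ i).le
      have hp := Real.sqrt_pos.2 (hβ i)
      rw [smul_eq_mul, mul_one, ← mul_inv, hs]
      exact inv_mul_cancel₀ (hβ i).ne'
    · simp
end
end

section
/- Let g be a symmetric positive definite real d×d matrix with inner product g(X,Y) = Xᵀ g Y, let J be any real d×d matrix, set 𝐁 = g⁻¹(Jᵀ − J), and define the bilinear form Φ on ℝ^d × ℝ^d by Φ((Q,P),(Q',P')) = 2⟨g⁻¹(P − JQ), P' − JQ'⟩. Let β_1, …, β_s > 0 and let u_1, v_1, …, u_s, v_s ∈ ℝ^d be a g-orthonormal family satisfying 𝐁u_i = −β_i v_i and 𝐁v_i = β_i u_i, and set f_i = β_i^{-1/2}(u_i, Jᵀu_i), f'_i = β_i^{-1/2}(v_i, Jᵀv_i) ∈ ℝ^{2d}. Then for all 1 ≤ i,j ≤ s: Φ(f_i, f_j) = 2β_i δ_{ij}, Φ(f'_i, f'_j) = 2β_i δ_{ij}, and Φ(f_i, f'_j) = 0.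 -/
open Matrix

noncomputable section

/-- The Hessian bilinear form of the magnetic Hamiltonian at a point of its zero set:
`Φ((Q,P),(Q',P')) = 2⟨g⁻¹(P − JQ), P' − JQ'⟩`. -/
def hessH {d : ℕ} (g J : Matrix (Fin d) (Fin d) ℝ)
    (p p' : (Fin d → ℝ) × (Fin d → ℝ)) : ℝ :=
  2 * ((g⁻¹ *ᵥ (p.2 - J *ᵥ p.1)) ⬝ᵥ (p'.2 - J *ᵥ p'.1))

/-- In the symplectic frame `(f_i, f'_i)` built from a `g`-orthonormal eigenframe of
`𝐁 = g⁻¹(Jᵀ − J)`, the Hessian `Φ` of the magnetic Hamiltonian is the diagonal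
matrix `diag(2β_1, 2β_1, …, 2β_s, 2β_s)`. -/
theorem hessian_diagonal_in_symplectic_frame {d s : ℕ}
    (g J : Matrix (Fin d) (Fin d) ℝ)
    (hgs : g.IsSymm) (hgpd : g.PosDef)
    (β : Fin s → ℝ) (hβ : ∀ i, 0 < β i)
    (u v : Fin s → (Fin d → ℝ))
    (huu : ∀ i j, u i ⬝ᵥ (g *ᵥ u j) = if i = j then 1 else 0)
    (hvv : ∀ i j, v i ⬝ᵥ (g *ᵥ v j) = if i = j then 1 else 0)
    (huv : ∀ i j, u i ⬝ᵥ (g *ᵥ v j) = 0)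
    (hBu : ∀ i, (g⁻¹ * (Jᵀ - J)) *ᵥ u i = (-(β i)) • v i)
    (hBv : ∀ i, (g⁻¹ * (Jᵀ - J)) *ᵥ v i = (β i) • u i)
    (f f' : Fin s → (Fin d → ℝ) × (Fin d → ℝ))
    (hf : ∀ i, f i = (Real.sqrt (β i))⁻¹ • ((u i, Jᵀ *ᵥ u i) : (Fin d → ℝ) × (Fin d → ℝ)))
    (hf' : ∀ i, f' i = (Real.sqrt (β i))⁻¹ • ((v i, Jᵀ *ᵥ v i) : (Fin d → ℝ) × (Fin d → ℝ))) :
    (∀ i j, hessH g J (f i) (f j) = if i = j then 2 * β i else 0) ∧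
    (∀ i j, hessH g J (f' i) (f' j) = if i = j then 2 * β i else 0) ∧
    (∀ i j, hessH g J (f i) (f' j) = 0) := by
  have hdet : IsUnit g.det := (Matrix.isUnit_iff_isUnit_det g).1 hgpd.isUnit
  have hvu : ∀ i j, v i ⬝ᵥ (g *ᵥ u j) = 0 := by
    intro i j
    rw [Matrix.dotProduct_mulVec, ← Matrix.mulVec_transpose, hgs.eq, dotProduct_comm]
    exact huv j i
  have key : ∀ (a b a' b' : Fin d → ℝ) (c c' : ℝ),
      (g⁻¹ * (Jᵀ - J)) *ᵥ a = a' → (g⁻¹ * (Jᵀ - J)) *ᵥ b = b' →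
      hessH g J (c • (a, Jᵀ *ᵥ a)) (c' • (b, Jᵀ *ᵥ b)) = 2 * (c * (c' * (a' ⬝ᵥ (g *ᵥ b')))) := by
    intro a b a' b' c c' ha hb
    have h1 : g⁻¹ *ᵥ (Jᵀ *ᵥ a - J *ᵥ a) = a' := by
      rw [← Matrix.sub_mulVec, Matrix.mulVec_mulVec, ha]
    have h2 : Jᵀ *ᵥ b - J *ᵥ b = g *ᵥ b' := by
      rw [← hb, Matrix.mulVec_mulVec, ← Matrix.mul_assoc, Matrix.mul_nonsing_inv g hdet,
        Matrix.one_mul, Matrix.sub_mulVec]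
    unfold hessH
    simp only [Prod.smul_mk, Matrix.mulVec_smul, ← smul_sub, h1, h2, smul_dotProduct,
      dotProduct_smul, smul_eq_mul]
    ring
  have hs : ∀ i, (Real.sqrt (β i))⁻¹ * ((Real.sqrt (β i))⁻¹ * (β i * β i)) = β i := by
    intro i
    have h := Real.mul_self_sqrt (hβ i).le
    have h0 : Real.sqrt (β i) ≠ 0 := (Real.sqrt_pos.2 (hβ i)).ne'
    rw [← mul_assoc, ← mul_inv, h, ← mul_assoc, inv_mul_cancel₀ (hβ i).ne', one_mul]
  refine ⟨fun i j => ?_, fun i j => ?_, fun i j => ?_⟩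
  · rw [hf, hf, key _ _ _ _ _ _ (hBu i) (hBu j)]
    simp only [Matrix.mulVec_smul, smul_dotProduct, dotProduct_smul, smul_eq_mul, hvv]
    split_ifs with h
    · subst h
      linear_combination 2 * hs i
    · simp
  · rw [hf', hf', key _ _ _ _ _ _ (hBv i) (hBv j)]
    simp only [Matrix.mulVec_smul, smul_dotProduct, dotProduct_smul, smul_eq_mul, huu]
    split_ifs with h
    · subst h
      linear_combination 2 * hs i
    · simp
  · rw [hf, hf', key _ _ _ _ _ _ (hBu i) (hBv j)]
    simp only [Matrix.mulVec_smul, smul_dotProduct, dotProduct_smul, smul_eq_mul, hvu]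
    simp
end
end

section
/- Let g be a symmetric positive definite real d×d matrix, J any real d×d matrix, 𝐁 = g⁻¹(Jᵀ − J), Φ((Q,P),(Q',P')) = 2⟨g⁻¹(P − JQ), P' − JQ'⟩ on ℝ^d × ℝ^d, and ω₀((Q,P),(Q',P')) = ⟨P',Q⟩ − ⟨P,Q'⟩. Then for every (Q,P) ∈ ℝ^d × ℝ^d the following are equivalent: (a) Φ((Q,P),(Q', JᵀQ')) = 0 for all Q' ∈ ℝ^d; (b) ω₀((Q,P),(𝐁Q', Jᵀ𝐁Q')) = 0 for all Q' ∈ ℝ^d. In other words, the Φ-orthogonal of the graph of Jᵀ equals the ω₀-orthogonal of the subspace F = {(𝐁Q', Jᵀ𝐁Q') : Q' ∈ ℝ^d}. -/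
open Matrix

noncomputable section

/-- The `Φ`-orthogonal of the graph of `Jᵀ` equals the `ω₀`-orthogonal of the
subspace `F = {(𝐁Q', Jᵀ𝐁Q')}`, where `𝐁 = g⁻¹(Jᵀ − J)`. -/
theorem hessian_orthogonal_eq_symplectic_orthogonal {d : ℕ}
    (g J : Matrix (Fin d) (Fin d) ℝ)
    (hgs : g.IsSymm) (hgpd : g.PosDef) :
    ∀ Q P : Fin d → ℝ,
      (∀ Q' : Fin d → ℝ, hessH g J (Q, P) (Q', Jᵀ *ᵥ Q') = 0) ↔
      (∀ Q' : Fin d → ℝ,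
        omega0 (Q, P)
          ((g⁻¹ * (Jᵀ - J)) *ᵥ Q', Jᵀ *ᵥ ((g⁻¹ * (Jᵀ - J)) *ᵥ Q')) = 0) := by
  intro Q P
  have hs : (g⁻¹)ᵀ = g⁻¹ := by rw [Matrix.transpose_nonsing_inv, hgs.eq]
  have key : ∀ Q' : Fin d → ℝ, hessH g J (Q, P) (Q', Jᵀ *ᵥ Q') =
      -2 * omega0 (Q, P)
          ((g⁻¹ * (Jᵀ - J)) *ᵥ Q', Jᵀ *ᵥ ((g⁻¹ * (Jᵀ - J)) *ᵥ Q')) := by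
    intro Q'
    have h1 : ∀ v w : Fin d → ℝ, (g⁻¹ *ᵥ v) ⬝ᵥ w = v ⬝ᵥ (g⁻¹ *ᵥ w) := by
      intro v w
      rw [Matrix.dotProduct_mulVec, ← Matrix.mulVec_transpose, hs]
    have h2 : ∀ v w : Fin d → ℝ, (Jᵀ *ᵥ v) ⬝ᵥ w = (J *ᵥ w) ⬝ᵥ v := by
      intro v w
      rw [Matrix.mulVec_transpose, ← Matrix.dotProduct_mulVec, dotProduct_comm]
    simp only [hessH, omega0]
    rw [h1, h2, ← Matrix.sub_mulVec, Matrix.mulVec_mulVec, sub_dotProduct]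
    ring
  constructor
  · intro h Q'
    have := key Q'
    rw [h Q'] at this
    linarith
  · intro h Q'
    rw [key Q', h Q', mul_zero]
end
end

section
/- Let s ≥ 1, r ∈ ℕ, let U ⊆ ℝ^m be open, and let β_1, …, β_s : U → ℝ be smooth functions such that for every u ∈ U and every α ∈ ℤ^s with 0 < |α| < r one has Σ_{j=1}^s α_j β_j(u) ≠ 0 (where |α| = Σ_j |α_j|). For multi-indices α, α' ∈ ℕ^s let m_{α,α'}(x,ξ) = ∏_j (x_j + iξ_j)^{α_j} ∏_j (x_j − iξ_j)^{α'_j}, let |z_j|²(x,ξ) = x_j² + ξ_j², and let the Poisson bracket in the (x,ξ) variables be {f,g} = Σ_j (∂_{ξ_j} f ∂_{x_j} g − ∂_{x_j} f ∂_{ξ_j} g). Let R : U × ℝ^{2s} → ℂ be a finite sum R(u,x,ξ) = Σ c_{α,α'}(u) m_{α,α'}(x,ξ) with smooth coefficients c_{α,α'} : U → ℂ, where every appearing pair satisfies |α| + |α'| < r. Then there exist functions K and ρ of the same form (finite sums of monomials m_{α,α'} of degree |α| + |α'| < r with smooth coefficients on U) such that R(u,x,ξ) = K(u,x,ξ) +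 Σ_{j=1}^s β_j(u) {|z_j|², ρ(u,·,·)}(x,ξ) for all (u,x,ξ), and {K(u,·,·), |z_j|²} = 0 for every u ∈ U and every j. -/
noncomputable section

/-- The Poisson bracket `{f,g} = Σ_j (∂_{ξ_j} f ∂_{x_j} g − ∂_{x_j} f ∂_{ξ_j} g)`
of complex-valued functions on `ℝ^s_x × ℝ^s_ξ`. -/
def poissonBracket {s : ℕ} (f g : ((Fin s → ℝ) × (Fin s → ℝ)) → ℂ)
    (p : (Fin s → ℝ) × (Fin s → ℝ)) : ℂ :=
  ∑ j : Fin s,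
    (fderiv ℝ f p (0, Pi.single j 1) * fderiv ℝ g p (Pi.single j 1, 0)
      - fderiv ℝ f p (Pi.single j 1, 0) * fderiv ℝ g p (0, Pi.single j 1))

/-- The monomial `m_{α,α'}(x,ξ) = ∏_j (x_j + iξ_j)^{α_j} ∏_j (x_j − iξ_j)^{α'_j}`. -/
def mono {s : ℕ} (α α' : Fin s → ℕ) (p : (Fin s → ℝ) × (Fin s → ℝ)) : ℂ :=
  (∏ j, ((p.1 j : ℂ) + Complex.I * (p.2 j : ℂ)) ^ (α j)) *
    (∏ j, ((p.1 j : ℂ) - Complex.I * (p.2 j : ℂ)) ^ (α' j))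

/-- The classical harmonic oscillator `|z_j|²(x,ξ) = x_j² + ξ_j²`, seen as a
complex-valued function. -/
def osc {s : ℕ} (j : Fin s) (p : (Fin s → ℝ) × (Fin s → ℝ)) : ℂ :=
  ((p.1 j) ^ 2 + (p.2 j) ^ 2 : ℝ)

lemma osc_hasFDerivAt {s : ℕ} (j : Fin s) (p v : (Fin s → ℝ) × (Fin s → ℝ)) :
    fderiv ℝ (osc j) p v = ((2 * p.1 j * v.1 j + 2 * p.2 j * v.2 j : ℝ) : ℂ) := by
  have hd : DifferentiableAt ℝ (osc j) p := by
    unfold osc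
    have : DifferentiableAt ℝ (fun p : (Fin s → ℝ) × (Fin s → ℝ) =>
        (p.1 j) ^ 2 + (p.2 j) ^ 2) p := by fun_prop
    exact Complex.ofRealCLM.differentiableAt.comp p this
  have h1 : HasDerivAt (fun t : ℝ => p + t • v) v 0 := by
    simpa using ((hasDerivAt_id (0:ℝ)).smul_const v).const_add p
  have h2 : HasDerivAt (fun t : ℝ => osc j (p + t • v)) (fderiv ℝ (osc j) p v) 0 := by
    have hd' : HasFDerivAt (osc j) (fderiv ℝ (osc j) p) (p + (0:ℝ) • v) := by
      simpa using hd.hasFDerivAt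
    exact hd'.comp_hasDerivAt (0:ℝ) h1
  have h3 : HasDerivAt (fun t : ℝ => osc j (p + t • v))
      ((2 * p.1 j * v.1 j + 2 * p.2 j * v.2 j : ℝ) : ℂ) 0 := by
    have ha : ∀ a b : ℝ, HasDerivAt (fun t : ℝ => (a + t * b) ^ 2) (2 * a * b) 0 := by
      intro a b
      have := ((((hasDerivAt_id (0:ℝ)).mul_const b).const_add a).fun_pow 2)
      simpa using this
    have := ((ha (p.1 j) (v.1 j)).add (ha (p.2 j) (v.2 j))).ofReal_comp
    simpa [osc] using this
  exact h2.unique h3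

lemma bracket_osc_left {s : ℕ} (j : Fin s) (f : ((Fin s → ℝ) × (Fin s → ℝ)) → ℂ)
    (p : (Fin s → ℝ) × (Fin s → ℝ)) :
    poissonBracket (osc j) f p
      = fderiv ℝ f p (Pi.single j (2 * p.2 j), Pi.single j (-(2 * p.1 j))) := by
  have hv : ((Pi.single j (2 * p.2 j), Pi.single j (-(2 * p.1 j))) :
      (Fin s → ℝ) × (Fin s → ℝ))
      = (2 * p.2 j) • ((Pi.single j 1, 0) : (Fin s → ℝ) × (Fin s → ℝ))
        + (-(2 * p.1 j)) • ((0, Pi.single j 1) : (Fin s → ℝ) × (Fin s → ℝ)) := by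
    ext k <;> by_cases hk : k = j <;> simp [Pi.single_apply, hk]
  rw [hv, map_add, map_smul, map_smul]
  unfold poissonBracket
  rw [Finset.sum_eq_single j]
  · simp [osc_hasFDerivAt]; ring
  · intro k _ hk
    simp [osc_hasFDerivAt, Pi.single_apply, hk.symm]
  · simp

lemma bracket_antisymm {s : ℕ} (f g : ((Fin s → ℝ) × (Fin s → ℝ)) → ℂ)
    (p : (Fin s → ℝ) × (Fin s → ℝ)) : poissonBracket f g p = - poissonBracket g f p := by
  unfold poissonBracket
  rw [← Finset.sum_neg_distrib]
  exact Finset.sum_congr rfl fun k _ => by ring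

lemma mono_differentiable {s : ℕ} (α α' : Fin s → ℕ) : Differentiable ℝ (mono α α') := by
  have h1 : ∀ j, Differentiable ℝ (fun p : (Fin s → ℝ) × (Fin s → ℝ) => (p.1 j : ℂ)) := by
    intro j
    exact Complex.ofRealCLM.differentiable.comp
      (by fun_prop : Differentiable ℝ (fun p : (Fin s → ℝ) × (Fin s → ℝ) => p.1 j))
  have h2 : ∀ j, Differentiable ℝ (fun p : (Fin s → ℝ) × (Fin s → ℝ) => (p.2 j : ℂ)) := by
    intro j
    exact Complex.ofRealCLM.differentiable.comp
      (by fun_prop : Differentiable ℝ (fun p : (Fin s → ℝ) × (Fin s → ℝ) => p.2 j))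
  unfold mono
  fun_prop

lemma prod_scale {s : ℕ} (j : Fin s) (z : Fin s → ℂ) (w : ℂ) (α : Fin s → ℕ) :
    ∏ k, (z k * (if k = j then w else 1)) ^ α k = w ^ α j * ∏ k, z k ^ α k := by
  simp_rw [mul_pow, Finset.prod_mul_distrib]
  rw [mul_comm]
  congr 1
  rw [Finset.prod_eq_single j]
  · simp
  · intro k _ hk; simp [hk]
  · simp

lemma mono_fderiv {s : ℕ} (α α' : Fin s → ℕ) (j : Fin s) (p : (Fin s → ℝ) × (Fin s → ℝ)) :
    fderiv ℝ (mono α α') p (Pi.single j (2 * p.2 j), Pi.single j (-(2 * p.1 j)))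
      = 2 * Complex.I * ((α' j : ℂ) - (α j : ℂ)) * mono α α' p := by
  set v : (Fin s → ℝ) × (Fin s → ℝ) :=
    (Pi.single j (2 * p.2 j), Pi.single j (-(2 * p.1 j))) with hv
  have h1 : HasDerivAt (fun t : ℝ => p + t • v) v 0 := by
    simpa using ((hasDerivAt_id (0:ℝ)).smul_const v).const_add p
  have h2 : HasDerivAt (fun t : ℝ => mono α α' (p + t • v)) (fderiv ℝ (mono α α') p v) 0 := by
    have hd' : HasFDerivAt (mono α α') (fderiv ℝ (mono α α') p) (p + (0:ℝ) • v) := by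
      simpa using (mono_differentiable α α' p).hasFDerivAt
    exact hd'.comp_hasDerivAt (0:ℝ) h1
  have he : (fun t : ℝ => mono α α' (p + t • v)) = fun t : ℝ =>
      ((1 + (t : ℂ) * (-2 * Complex.I)) ^ α j * (1 + (t : ℂ) * (2 * Complex.I)) ^ α' j)
        * mono α α' p := by
    funext t
    have e1 : ∀ k, (((p + t • v).1 k : ℝ) : ℂ) + Complex.I * (((p + t • v).2 k : ℝ) : ℂ)
        = ((p.1 k : ℂ) + Complex.I * (p.2 k : ℂ)) *
          (if k = j then (1 + (t : ℂ) * (-2 * Complex.I)) else 1) := by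
      intro k
      by_cases hk : k = j
      · subst hk
        simp [hv]
        linear_combination (2 * (t : ℂ) * p.2 k) * Complex.I_sq
      · simp [hv, hk]
    have e2 : ∀ k, (((p + t • v).1 k : ℝ) : ℂ) - Complex.I * (((p + t • v).2 k : ℝ) : ℂ)
        = ((p.1 k : ℂ) - Complex.I * (p.2 k : ℂ)) *
          (if k = j then (1 + (t : ℂ) * (2 * Complex.I)) else 1) := by
      intro k
      by_cases hk : k = j
      · subst hk
        simp [hv]
        linear_combination (2 * (t : ℂ) * p.2 k) * Complex.I_sq
      · simp [hv, hk]
    unfold mono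
    simp_rw [e1, e2, prod_scale]
    ring
  rw [he] at h2
  have hl : ∀ (b : ℂ) (n : ℕ), HasDerivAt (fun t : ℝ => (1 + (t : ℂ) * b) ^ n) (n * b) 0 := by
    intro b n
    have h0 : HasDerivAt (fun t : ℝ => (t : ℂ)) 1 0 := by
      simpa using (hasDerivAt_id (0:ℝ)).ofReal_comp
    simpa using ((h0.mul_const b).const_add 1).fun_pow n
  have h3 := ((hl (-2 * Complex.I) (α j)).mul (hl (2 * Complex.I) (α' j))).mul_const
    (mono α α' p)
  have h4 := h2.unique h3
  rw [h4]
  simp only [Complex.ofReal_zero, zero_mul, add_zero, one_pow]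
  ring

lemma bracket_osc_sum {s : ℕ} (j : Fin s) (T : Finset ((Fin s → ℕ) × (Fin s → ℕ)))
    (k : ((Fin s → ℕ) × (Fin s → ℕ)) → ℂ) (p : (Fin s → ℝ) × (Fin s → ℝ)) :
    poissonBracket (osc j) (fun q => ∑ a ∈ T, k a * mono a.1 a.2 q) p
      = ∑ a ∈ T, k a * (2 * Complex.I * ((a.2 j : ℂ) - (a.1 j : ℂ)) * mono a.1 a.2 p) := by
  rw [bracket_osc_left, fderiv_fun_sum
    (fun a _ => ((mono_differentiable a.1 a.2) p).const_mul (k a))]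
  rw [sum_apply]
  refine Finset.sum_congr rfl fun a _ => ?_
  rw [fderiv_const_mul ((mono_differentiable a.1 a.2) p), smul_apply,
    mono_fderiv, smul_eq_mul]

/-- The cohomological step of the Birkhoff normal form algorithm: under the
non-resonance condition on `β_1, …, β_s`, every finite sum
`R(u,x,ξ) = Σ c_{α,α'}(u) m_{α,α'}(x,ξ)` of monomials of degree `< r` with smooth
coefficients splits as `R = K + Σ_j β_j(u) {|z_j|², ρ(u,·)}`, where `K` and `ρ` have
the same form and `K(u,·)` Poisson-commutes with every oscillator `|z_j|²`. -/
theorem birkhoff_cohomological_equation {s m : ℕ} (hs : 1 ≤ s) (r : ℕ)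
    (U : Set (Fin m → ℝ)) (hU : IsOpen U)
    (β : Fin s → (Fin m → ℝ) → ℝ)
    (hβsm : ∀ j, ContDiffOn ℝ (⊤ : ℕ∞) (β j) U)
    (hres : ∀ u ∈ U, ∀ α : Fin s → ℤ,
      0 < ∑ j, |α j| → ∑ j, |α j| < (r : ℤ) → ∑ j, (α j : ℝ) * β j u ≠ 0)
    (S : Finset ((Fin s → ℕ) × (Fin s → ℕ)))
    (hS : ∀ a ∈ S, (∑ j, a.1 j) + (∑ j, a.2 j) < r)
    (c : ((Fin s → ℕ) × (Fin s → ℕ)) → (Fin m → ℝ) → ℂ)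
    (hc : ∀ a ∈ S, ContDiffOn ℝ (⊤ : ℕ∞) (c a) U) :
    ∃ (T T' : Finset ((Fin s → ℕ) × (Fin s → ℕ)))
      (kc rc : ((Fin s → ℕ) × (Fin s → ℕ)) → (Fin m → ℝ) → ℂ),
      (∀ a ∈ T, (∑ j, a.1 j) + (∑ j, a.2 j) < r) ∧
      (∀ a ∈ T', (∑ j, a.1 j) + (∑ j, a.2 j) < r) ∧
      (∀ a ∈ T, ContDiffOn ℝ (⊤ : ℕ∞) (kc a) U) ∧
      (∀ a ∈ T', ContDiffOn ℝ (⊤ : ℕ∞) (rc a) U) ∧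
      (∀ u ∈ U, ∀ p : (Fin s → ℝ) × (Fin s → ℝ),
        (∑ a ∈ S, c a u * mono a.1 a.2 p)
          = (∑ a ∈ T, kc a u * mono a.1 a.2 p)
            + ∑ j : Fin s, (β j u : ℂ) *
                poissonBracket (osc j) (fun q => ∑ a ∈ T', rc a u * mono a.1 a.2 q) p) ∧
      (∀ u ∈ U, ∀ j : Fin s, ∀ p : (Fin s → ℝ) × (Fin s → ℝ),
        poissonBracket (fun q => ∑ a ∈ T, kc a u * mono a.1 a.2 q) (osc j) p = 0) := by
  classical
  let D : ((Fin s → ℕ) × (Fin s → ℕ)) → (Fin m → ℝ) → ℂ := fun a u =>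
    ∑ j, (β j u : ℂ) * (2 * Complex.I * ((a.2 j : ℂ) - (a.1 j : ℂ)))
  have hD : ∀ a ∈ S, a.1 ≠ a.2 → ∀ u ∈ U, D a u ≠ 0 := by
    intro a ha hne u hu h0
    have hD' : D a u = 2 * Complex.I *
        ((∑ j, (((a.2 j : ℤ) - (a.1 j : ℤ) : ℤ) : ℝ) * β j u : ℝ) : ℂ) := by
      simp only [D]
      push_cast
      rw [Finset.mul_sum]
      exact Finset.sum_congr rfl fun j _ => by ring
    rw [hD'] at h0
    have h1 : (∑ j, (((a.2 j : ℤ) - (a.1 j : ℤ) : ℤ) : ℝ) * β j u : ℝ) = 0 := by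
      have := (mul_eq_zero.mp h0).resolve_left (by simp)
      exact_mod_cast this
    refine hres u hu (fun j => (a.2 j : ℤ) - (a.1 j : ℤ)) ?_ ?_ h1
    · obtain ⟨j, hj⟩ := Function.ne_iff.mp hne
      refine Finset.sum_pos' (fun _ _ => abs_nonneg _) ⟨j, Finset.mem_univ _, ?_⟩
      rw [abs_pos]
      omega
    · have h2 := hS a ha
      have h3 : ∑ j, |(a.2 j : ℤ) - (a.1 j : ℤ)| ≤ ∑ j, ((a.1 j : ℤ) + (a.2 j : ℤ)) := by
        refine Finset.sum_le_sum fun j _ => ?_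
        rw [abs_le]
        constructor <;> omega
      rw [Finset.sum_add_distrib] at h3
      refine lt_of_le_of_lt h3 ?_
      exact_mod_cast h2
  have hDs : ∀ a, ContDiffOn ℝ (⊤ : ℕ∞) (D a) U := by
    intro a
    refine ContDiffOn.sum fun j _ => ?_
    exact (Complex.ofRealCLM.contDiff.comp_contDiffOn (hβsm j)).mul contDiffOn_const
  refine ⟨S.filter (fun a => a.1 = a.2), S.filter (fun a => ¬ a.1 = a.2), c,
    fun a u => c a u * (D a u)⁻¹, ?_, ?_, ?_, ?_, ?_, ?_⟩
  · exact fun a ha => hS a (Finset.mem_filter.mp ha).1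
  · exact fun a ha => hS a (Finset.mem_filter.mp ha).1
  · exact fun a ha => hc a (Finset.mem_filter.mp ha).1
  · intro a ha
    obtain ⟨ha, hne⟩ := Finset.mem_filter.mp ha
    exact (hc a ha).mul ((hDs a).inv (hD a ha hne))
  · intro u hu p
    rw [← Finset.sum_filter_add_sum_filter_not S (fun a => a.1 = a.2)]
    congr 1
    simp_rw [bracket_osc_sum, Finset.mul_sum]
    rw [Finset.sum_comm]
    refine Finset.sum_congr rfl fun a ha => ?_
    obtain ⟨ha, hne⟩ := Finset.mem_filter.mp ha
    have hd := hD a ha hne u hu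
    have : ∑ j, (β j u : ℂ) * (c a u * (D a u)⁻¹ *
        (2 * Complex.I * ((a.2 j : ℂ) - (a.1 j : ℂ)) * mono a.1 a.2 p))
        = D a u * (c a u * (D a u)⁻¹ * mono a.1 a.2 p) := by
      conv_rhs => arg 1; simp only [D]
      rw [Finset.sum_mul]
      exact Finset.sum_congr rfl fun j _ => by ring
    rw [this]
    field_simp
  · intro u hu j p
    rw [bracket_antisymm, bracket_osc_sum, neg_eq_zero]
    refine Finset.sum_eq_zero fun a ha => ?_
    rw [(Finset.mem_filter.mp ha).2]
    simp
end
end
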